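/- In the partial observation model, restricting attention to control laws of the form U^i_t = ḡ^i_t(Ξ^i_t, Z_{1:t}, U_{1:t-1}) at all control stations i = 1,…,n is without loss of optimality, where Ξ^i_t ∈ Δ(𝒳^i) is defined by Ξ^i_t(x) = P(X^i_t = x | Y^i_{1:t}, Z_{1:t}, U_{1:t-1}): for every strategy g of the general form U^i_t = g^i_t(Z_{1:t}, Y^i_{1:t}, U_{1:t-1}) there exists a strategy ḡ of the stated form with J(ḡ) ≤ J(g). -/

import Mathlib

/-!
Why a station may forget its observations and keep only its posterior:

* **The posterior does not depend on strategies.** Conditionally on the public history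
  `(Z_{1:t}, U_{1:t-1})` the stations are independent. Concretely, the probability of a history
  is the product of a public factor and one factor `lik` per station (`EH_eq`). The factor of
  station `i` carries indicators saying that its recorded actions follow its law, but these do not
  involve the local state; hence `lik` is a scalar times `belief`, the normalized filter, which is
  computed from the observations and the public history without reference to any strategy
  (`lik_eq`).
* **One step of improvement.** Suppose that station `i` acts through its belief after time `t`.
  Since the filter is recursive, the cost-to-go at `t` depends on the past observations of `i`
  only through its belief (`value_congr_belief`). Given the public history and an action for `i`,
  the expected cost at an observation history of `i` is then a nonnegative scalar times a quantity
  depending on the belief alone, so one minimizing action can be chosen for a whole class of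
  observation histories with equal beliefs (`exists_class_rule`, `improve`).
* **Iteration.** Going backwards in time makes one station act through its belief
  (`improve_station`). Because beliefs do not depend on the strategies, changing the laws of one
  station does not destroy the structure already obtained for the others, so the stations can be
  treated one after the other (`improve_all`).
* **The filter is the posterior.** On sample points of nonzero weight the Bayes quotient
  `XiBelief` equals `belief` (`XiBelief_eq`), by the same factorization.
-/

open scoped Classical

namespace ControlSharing

variable {n T : ℕ}
variable {Z : Type} [Fintype Z] [Nonempty Z]
variable {X : Fin n → Type} [∀ i, Fintype (X i)] [∀ i, Nonempty (X i)]
variable {Y : Fin n → Type} [∀ i, Fintype (Y i)] [∀ i, Nonempty (Y i)]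
variable {U : Fin n → Type} [∀ i, Fintype (U i)] [∀ i, Nonempty (U i)]
variable {W0 : Type} [Fintype W0] [Nonempty W0]
variable {W : Fin n → Type} [∀ i, Fintype (W i)] [∀ i, Nonempty (W i)]
variable {WT : Fin n → Type} [∀ i, Fintype (WT i)] [∀ i, Nonempty (WT i)]

/-- A probability weight function on a finite type. -/
def IsLaw {α : Type} [Fintype α] (P : α → ℝ) : Prop :=
  (∀ a, 0 ≤ P a) ∧ ∑ a, P a = 1

/-- Sample space of primitive random variables for the partial observation model: the initial
shared state `Z₁`, the initial local states `X₁ⁱ`, the shared-dynamics noises `W⁰_t`, the local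
plant noises `Wⁱ_t` and the observation noises `W̃ⁱ_t`. -/
abbrev OmegaP (T : ℕ) (Z : Type) (X : Fin n → Type) (W0 : Type) (W WT : Fin n → Type) : Type :=
  Z × (∀ i, X i) × (Fin T → W0) × (∀ i, Fin T → W i) × (∀ i, Fin T → WT i)

/-- The probability weight of a sample point: `Z₁ ~ P_Z`; conditionally on `Z₁` the initial
local states are independent with `X₁ⁱ ~ P_{Xⁱ|Z}(·|Z₁)`; all plant and observation noises are
independent with laws `P_{W⁰}`, `P_{Wⁱ}`, `P_{W̃ⁱ}`, independent of the initial states. -/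
noncomputable def weightP (PZ : Z → ℝ) (PX : ∀ i, Z → X i → ℝ) (PW0 : W0 → ℝ)
    (PW : ∀ i, W i → ℝ) (PWT : ∀ i, WT i → ℝ) (ω : OmegaP T Z X W0 W WT) : ℝ :=
  PZ ω.1 * (∏ i, PX i ω.1 (ω.2.1 i)) * (∏ t, PW0 (ω.2.2.1 t)) *
    (∏ i, ∏ t, PW i (ω.2.2.2.1 i t)) * (∏ i, ∏ t, PWT i (ω.2.2.2.2 i t))

/-- A control strategy for the partial observation model: station `i` chooses
`Uⁱ_t = gⁱ_t(Z_{1:t}, Yⁱ_{1:t}, U_{1:t-1})`. -/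
def StrategyP (Z : Type) (Y U : Fin n → Type) : Type :=
  ∀ (i : Fin n) (t : ℕ), (Fin (t + 1) → Z) → (Fin (t + 1) → Y i) →
    (Fin t → ∀ j, U j) → U i

variable (f0 : ℕ → Z → (∀ j, U j) → W0 → Z)
variable (f : ∀ i, ℕ → Z → X i → (∀ j, U j) → W i → X i)
variable (ℓ : ∀ i, ℕ → X i → WT i → Y i)

/-- The closed-loop trajectory of the partial observation model: histories
`(Z_{1:t+1}, X_{1:t+1}, Y_{1:t+1}, U_{1:t+1})` generated by
`Z_{t+1} = f⁰_t(Z_t, U_t, W⁰_t)`, `Xⁱ_{t+1} = fⁱ_t(Z_t, Xⁱ_t, U_t, Wⁱ_t)`,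
`Yⁱ_t = ℓⁱ_t(Xⁱ_t, W̃ⁱ_t)` and the strategy `g`. -/
noncomputable def trajP (g : StrategyP Z Y U) (ω : OmegaP T Z X W0 W WT) :
    (t : ℕ) → (Fin (t + 1) → Z) × (∀ i, Fin (t + 1) → X i) ×
      (∀ i, Fin (t + 1) → Y i) × (Fin (t + 1) → ∀ j, U j)
  | 0 =>
    let zh : Fin 1 → Z := fun _ => ω.1
    let xh : ∀ i, Fin 1 → X i := fun i _ => ω.2.1 i
    let yh : ∀ i, Fin 1 → Y i := fun i _ =>
      ℓ i 0 (ω.2.1 i)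
        (if h : 0 < T then ω.2.2.2.2 i ⟨0, h⟩ else Classical.arbitrary (WT i))
    ⟨zh, xh, yh, fun _ j => g j 0 zh (yh j) (fun s => s.elim0)⟩
  | t + 1 =>
    let prev := trajP g ω t
    let ucur := prev.2.2.2 (Fin.last t)
    let znew := f0 t (prev.1 (Fin.last t)) ucur
      (if h : t < T then ω.2.2.1 ⟨t, h⟩ else Classical.arbitrary W0)
    let xnew : ∀ i, X i := fun i =>
      f i t (prev.1 (Fin.last t)) (prev.2.1 i (Fin.last t)) ucur
        (if h : t < T then ω.2.2.2.1 i ⟨t, h⟩ else Classical.arbitrary (W i))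
    let ynew : ∀ i, Y i := fun i =>
      ℓ i (t + 1) (xnew i)
        (if h : t + 1 < T then ω.2.2.2.2 i ⟨t + 1, h⟩ else Classical.arbitrary (WT i))
    let zh : Fin (t + 2) → Z := Fin.snoc prev.1 znew
    let xh : ∀ i, Fin (t + 2) → X i := fun i => Fin.snoc (prev.2.1 i) (xnew i)
    let yh : ∀ i, Fin (t + 2) → Y i := fun i => Fin.snoc (prev.2.2.1 i) (ynew i)
    ⟨zh, xh, yh, Fin.snoc prev.2.2.2 (fun j => g j (t + 1) zh (yh j) prev.2.2.2)⟩

/-- The shared state process `Z_t`. -/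
noncomputable def ZpP (g : StrategyP Z Y U) (t : ℕ) (ω : OmegaP T Z X W0 W WT) : Z :=
  (trajP f0 f ℓ g ω t).1 (Fin.last t)

/-- The local state process `Xⁱ_t`. -/
noncomputable def XpP (g : StrategyP Z Y U) (i : Fin n) (t : ℕ) (ω : OmegaP T Z X W0 W WT) :
    X i :=
  (trajP f0 f ℓ g ω t).2.1 i (Fin.last t)

/-- The observation process `Yⁱ_t`. -/
noncomputable def YpP (g : StrategyP Z Y U) (i : Fin n) (t : ℕ) (ω : OmegaP T Z X W0 W WT) :
    Y i :=
  (trajP f0 f ℓ g ω t).2.2.1 i (Fin.last t)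

/-- The action process `Uⁱ_t`. -/
noncomputable def UpP (g : StrategyP Z Y U) (i : Fin n) (t : ℕ) (ω : OmegaP T Z X W0 W WT) :
    U i :=
  (trajP f0 f ℓ g ω t).2.2.2 (Fin.last t) i

/-- Probability of an event under a weight function. -/
noncomputable def Pr {Ω : Type} [Fintype Ω] (μ : Ω → ℝ) (A : Ω → Prop) : ℝ :=
  ∑ ω : Ω, if A ω then μ ω else 0

/-- Conditional probability `P(A | B)`. -/
noncomputable def CondPr {Ω : Type} [Fintype Ω] (μ : Ω → ℝ) (A B : Ω → Prop) : ℝ :=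
  Pr μ (fun ω => A ω ∧ B ω) / Pr μ B

/-- Conditional expectation `E[h | B]`. -/
noncomputable def CondExp {Ω : Type} [Fintype Ω] (μ : Ω → ℝ) (h : Ω → ℝ) (B : Ω → Prop) : ℝ :=
  (∑ ω : Ω, if B ω then μ ω * h ω else 0) / Pr μ B

/-- The expected total cost `J(g) = E[∑_{t=1}^T c_t(Z_t, X_t, U_t)]`. -/
noncomputable def JP (c : ℕ → Z → (∀ i, X i) → (∀ i, U i) → ℝ)
    (μ : OmegaP T Z X W0 W WT → ℝ) (g : StrategyP Z Y U) : ℝ :=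
  ∑ ω : OmegaP T Z X W0 W WT, μ ω *
    ∑ t ∈ Finset.range T,
      c t (ZpP f0 f ℓ g t ω) (fun i => XpP f0 f ℓ g i t ω) (fun i => UpP f0 f ℓ g i t ω)

/-- The posterior belief `Ξⁱ_t` of control station `i` on its local state `Xⁱ_t` given all of
its information `(Yⁱ_{1:t}, Z_{1:t}, U_{1:t-1})`, realized at the sample point `ω`. -/
noncomputable def XiBelief (μ : OmegaP T Z X W0 W WT → ℝ) (g : StrategyP Z Y U) (i : Fin n)
    (t : ℕ) (ω : OmegaP T Z X W0 W WT) : X i → ℝ := fun x =>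
  CondPr μ (fun ω' => XpP f0 f ℓ g i t ω' = x)
    (fun ω' => (∀ s ≤ t, YpP f0 f ℓ g i s ω' = YpP f0 f ℓ g i s ω) ∧
      (∀ s ≤ t, ZpP f0 f ℓ g s ω' = ZpP f0 f ℓ g s ω) ∧
      (∀ s < t, ∀ j, UpP f0 f ℓ g j s ω' = UpP f0 f ℓ g j s ω))

set_option linter.unusedSectionVars false

section Helpers

/-! ### Finite sums -/

/-- Exchanging an independent copy `b` of coordinate `i` with the coordinate itself is an involution
of the pairs `(b, y)`, hence does not change the sum. -/
theorem sum_swap_update {ι : Type*} [Fintype ι] [DecidableEq ι] {B : ι → Type*}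
    [∀ i, Fintype (B i)] (i : ι) (K : B i → (∀ j, B j) → ℝ) :
    ∑ b, ∑ y, K b y = ∑ b, ∑ y : ∀ j, B j, K (y i) (Function.update y i b) := by
  rw [← Fintype.sum_prod_type', ← Fintype.sum_prod_type']
  let e : B i × (∀ j, B j) → B i × (∀ j, B j) :=
    fun p => (p.2 i, Function.update p.2 i p.1)
  have he : Function.Involutive e := by
    rintro ⟨b, y⟩
    simp [e]
  exact (Equiv.sum_comp he.toPerm (fun p : B i × (∀ j, B j) => K p.1 p.2)).symm

/-- For a function insensitive to coordinate `i`, restricting that coordinate to a fixed value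
divides the total by the number of its values. -/
theorem sum_marked {ι : Type*} [Fintype ι] [DecidableEq ι] {A : ι → Type*}
    [∀ i, Fintype (A i)] (i : ι) (x₀ : A i) (H : (∀ j, A j) → ℝ)
    (hH : ∀ x b, H (Function.update x i b) = H x) :
    (Fintype.card (A i) : ℝ) * ∑ x, (if x i = x₀ then H x else 0) = ∑ x, H x := by
  have h1 := sum_swap_update i (fun (_ : A i) (x : ∀ j, A j) => if x i = x₀ then H x else 0)
  simp only [Finset.sum_const, Finset.card_univ, nsmul_eq_mul, Function.update_self, hH] at h1
  rw [h1, Finset.sum_comm]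
  simp

/-- Coordinate `k` of an i.i.d. sequence may be replaced by a fresh independent draw. -/
theorem resample {T : ℕ} {A : Type} [Fintype A] (p : A → ℝ) (hp : ∑ a, p a = 1)
    (k : Fin T) (F : (Fin T → A) → ℝ) :
    ∑ v : Fin T → A, (∏ s, p (v s)) * F v =
      ∑ v : Fin T → A, (∏ s, p (v s)) * ∑ a, p a * F (Function.update v k a) := by
  have h1 : ∑ v : Fin T → A, (∏ s, p (v s)) * F v =
      ∑ a, ∑ v : Fin T → A, p a * ((∏ s, p (v s)) * F v) := by
    simp_rw [← Finset.mul_sum, ← Finset.sum_mul, hp, one_mul]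
  rw [h1, sum_swap_update (B := fun _ : Fin T => A) k, Finset.sum_comm]
  refine Finset.sum_congr rfl fun v _ => ?_
  rw [Finset.mul_sum]
  refine Finset.sum_congr rfl fun a _ => ?_
  rw [← Finset.mul_prod_erase Finset.univ (fun s => p (v s)) (Finset.mem_univ k),
    ← Finset.mul_prod_erase Finset.univ (fun s => p (Function.update v k a s))
      (Finset.mem_univ k)]
  have : ∏ s ∈ Finset.univ.erase k, p (Function.update v k a s) =
      ∏ s ∈ Finset.univ.erase k, p (v s) :=
    Finset.prod_congr rfl fun s hs => by
      rw [Function.update_of_ne (Finset.ne_of_mem_erase hs)]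
  rw [this, Function.update_self]
  ring

theorem sum_prod_law {T : ℕ} {A : Type} [Fintype A] (p : A → ℝ) (hp : ∑ a, p a = 1) :
    ∑ v : Fin T → A, ∏ s, p (v s) = 1 := by
  rw [← Fintype.prod_sum (fun (_ : Fin T) a => p a)]
  simp [hp]

theorem sum_pi_law {m : ℕ} {A : Fin m → Type} [∀ i, Fintype (A i)] (p : ∀ i, A i → ℝ)
    (hp : ∀ i, ∑ a, p i a = 1) : ∑ v : ∀ i, A i, ∏ i, p i (v i) = 1 := by
  rw [← Fintype.prod_sum p]
  simp [hp]

theorem sum_piComm {m T : ℕ} {A : Fin m → Type} [∀ i, Fintype (A i)]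
    (G : (∀ i, Fin T → A i) → ℝ) :
    ∑ v : ∀ i, Fin T → A i, G v = ∑ v : Fin T → ∀ i, A i, G (fun i s => v s i) :=
  (Equiv.sum_comp (Equiv.piComm (fun (_ : Fin T) (i : Fin m) => A i)) G).symm

theorem sum_prod_laws {m T : ℕ} {A : Fin m → Type} [∀ i, Fintype (A i)] (p : ∀ i, A i → ℝ)
    (hp : ∀ i, ∑ a, p i a = 1) :
    ∑ v : ∀ i, Fin T → A i, ∏ i, ∏ s, p i (v i s) = 1 := by
  rw [sum_piComm]
  simp_rw [Finset.prod_comm (s := (Finset.univ : Finset (Fin m)))]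
  exact sum_prod_law (fun a : ∀ i, A i => ∏ i, p i (a i)) (sum_pi_law p hp)

/-- The version of `resample` for a family of sequences, redrawing time `k` of all of them. -/
theorem resample_pi {m T : ℕ} {A : Fin m → Type} [∀ i, Fintype (A i)] (p : ∀ i, A i → ℝ)
    (hp : ∀ i, ∑ a, p i a = 1) (k : Fin T) (F : (∀ i, Fin T → A i) → ℝ) :
    ∑ v : ∀ i, Fin T → A i, (∏ i, ∏ s, p i (v i s)) * F v =
      ∑ v : ∀ i, Fin T → A i, (∏ i, ∏ s, p i (v i s)) *
        ∑ a : ∀ i, A i, (∏ i, p i (a i)) * F (fun i => Function.update (v i) k (a i)) := by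
  rw [sum_piComm, sum_piComm]
  simp_rw [Finset.prod_comm (s := (Finset.univ : Finset (Fin m)))]
  rw [resample (fun a : ∀ i, A i => ∏ i, p i (a i)) (sum_pi_law p hp) k]
  refine Finset.sum_congr rfl fun v _ => ?_
  congr 1
  refine Finset.sum_congr rfl fun a _ => ?_
  congr 2
  funext i s
  by_cases h : s = k
  · subst h; simp
  · simp [h]

/-- Change of variables: the expectation of `G ∘ φ` is taken under the image law of `φ`. -/
theorem sum_push {N A : Type} [Fintype N] [Fintype A] (p : N → ℝ) (φ : N → A) (G : A → ℝ) :
    ∑ w, p w * G (φ w) = ∑ v, (∑ w, if φ w = v then p w else 0) * G v := by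
  simp_rw [Finset.sum_mul]
  rw [Finset.sum_comm]
  refine Finset.sum_congr rfl fun w _ => ?_
  simp [ite_mul]

/-- Change of variables for independent coordinates: the image law is again a product. -/
theorem sum_push_pi {m : ℕ} {N A : Fin m → Type} [∀ i, Fintype (N i)] [∀ i, Fintype (A i)]
    (p : ∀ i, N i → ℝ) (φ : ∀ i, N i → A i) (G : (∀ i, A i) → ℝ) :
    ∑ w : ∀ i, N i, (∏ i, p i (w i)) * G (fun i => φ i (w i)) =
      ∑ v : ∀ i, A i, (∏ i, ∑ w, if φ i w = v i then p i w else 0) * G v := by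
  rw [sum_push (fun w : ∀ i, N i => ∏ i, p i (w i)) (fun w i => φ i (w i)) G]
  refine Finset.sum_congr rfl fun v _ => ?_
  congr 1
  rw [Fintype.prod_sum]
  refine Finset.sum_congr rfl fun w _ => ?_
  by_cases h : (fun i => φ i (w i)) = v
  · rw [if_pos h]
    exact Finset.prod_congr rfl fun i _ => by rw [if_pos (congrFun h i)]
  · rw [if_neg h]
    obtain ⟨i, hi⟩ := Function.ne_iff.mp h
    exact (Finset.prod_eq_zero (Finset.mem_univ i) (if_neg hi)).symm

theorem sum_snoc {m : ℕ} {A : Type} [Fintype A] (G : (Fin (m + 1) → A) → ℝ) :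
    ∑ v, G v = ∑ v : Fin m → A, ∑ a, G (Fin.snoc v a) := by
  rw [← Equiv.sum_comp (Fin.snocEquiv (fun _ : Fin (m + 1) => A)) G, Fintype.sum_prod_type,
    Finset.sum_comm]
  rfl

theorem sum_snoc_pi {k m : ℕ} {A : Fin k → Type} [∀ i, Fintype (A i)]
    (G : (∀ i, Fin (m + 1) → A i) → ℝ) :
    ∑ v, G v = ∑ v : ∀ i, Fin m → A i, ∑ a : ∀ i, A i,
      G (fun i => Fin.snoc (v i) (a i)) := by
  rw [sum_piComm, sum_snoc, sum_piComm]
  refine Finset.sum_congr rfl fun v _ => Finset.sum_congr rfl fun a _ => ?_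
  congr 1
  funext i s
  refine Fin.lastCases ?_ (fun s => ?_) s <;> simp

/-- Improvement at a single information class: if the cost of playing `a` at the profile `y`
is a nonnegative function of `y i` times a quantity that sees `y i` only through `φ (y i)`, then
a decision rule for coordinate `i` may be taken to factor through `φ`. -/
theorem exists_class_rule {m : ℕ} {B : Fin m → Type} [∀ i, Fintype (B i)] {A C : Type}
    [Fintype A] [Nonempty A] (i : Fin m) (φ : B i → C) (κ : B i → ℝ) (hκ : ∀ b, 0 ≤ κ b)
    (F R : (∀ j, B j) → A → ℝ) (hF : ∀ y a, F y a = κ (y i) * R y a)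
    (hR : ∀ y y' a, φ (y i) = φ (y' i) → (∀ j, j ≠ i → y j = y' j) → R y a = R y' a)
    (a₀ : B i → A) :
    ∃ γ : B i → A, (∀ b b', φ b = φ b' → γ b = γ b') ∧
      ∑ y, F y (γ (y i)) ≤ ∑ y, F y (a₀ (y i)) := by
  have hmin : ∀ G : A → ℝ, ∃ a, ∀ a', G a ≤ G a' := fun G => Finite.exists_min G
  choose sel hsel using hmin
  let G : B i → A → ℝ := fun b a => ∑ y : ∀ j, B j, R (Function.update y i b) a
  refine ⟨fun b => sel (G b), fun b b' hb => ?_, ?_⟩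
  · have : G b = G b' := by
      funext a
      refine Finset.sum_congr rfl fun y _ => hR _ _ _ (by simpa using hb) fun j hj => ?_
      simp [hj]
    simp only [this]
  · have key : ∀ γ : B i → A,
        (Fintype.card (B i) : ℝ) * ∑ y, F y (γ (y i)) = ∑ b, κ b * G b (γ b) := by
      intro γ
      have h1 := sum_swap_update i (fun (_ : B i) (y : ∀ j, B j) => F y (γ (y i)))
      simp only [Finset.sum_const, Finset.card_univ, nsmul_eq_mul, Function.update_self] at h1
      rw [h1]
      refine Finset.sum_congr rfl fun b _ => ?_
      rw [Finset.mul_sum]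
      exact Finset.sum_congr rfl fun y _ => by rw [hF, Function.update_self]
    rcases isEmpty_or_nonempty (B i) with he | he
    · have : IsEmpty (∀ j, B j) := ⟨fun y => he.elim (y i)⟩
      simp
    · have hc : (0 : ℝ) < Fintype.card (B i) := by exact_mod_cast Fintype.card_pos
      refine le_of_mul_le_mul_left ?_ hc
      rw [key a₀, key fun b => sel (G b)]
      exact Finset.sum_le_sum fun b _ => mul_le_mul_of_nonneg_left (hsel _ _) (hκ b)

theorem sum_reorder {A B C D E F G : Type} [Fintype A] [Fintype B] [Fintype C] [Fintype D]
    [Fintype E] [Fintype F] [Fintype G] (H : A → B → C → D → E → F → G → ℝ) :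
    ∑ a, ∑ b, ∑ c, ∑ d, ∑ e, ∑ f, ∑ g, H a b c d e f g =
      ∑ a, ∑ e, ∑ f, ∑ c, ∑ g, ∑ d, ∑ b, H a b c d e f g := by
  simp only [← Fintype.sum_prod_type']
  exact Fintype.sum_equiv
    ⟨fun ⟨a, b, c, d, e, f, g⟩ => ⟨a, e, f, c, g, d, b⟩,
     fun ⟨a, e, f, c, g, d, b⟩ => ⟨a, b, c, d, e, f, g⟩,
     fun _ => rfl, fun _ => rfl⟩ _ _ fun _ => rfl

/-! ### Histories along the closed loop -/

/-- The action profile prescribed by `g` at time `t` on given histories. -/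
def act (g : StrategyP Z Y U) (t : ℕ) (z : Fin (t + 1) → Z) (y : ∀ i, Fin (t + 1) → Y i)
    (u : Fin t → ∀ j, U j) : ∀ j, U j :=
  fun j => g j t z (y j) u

/-- The shared history up to and including time `t`; times start at `0`, so it has `t + 1` entries. -/
noncomputable def zH (g : StrategyP Z Y U) (t : ℕ) (ω : OmegaP T Z X W0 W WT) :
    Fin (t + 1) → Z :=
  (trajP f0 f ℓ g ω t).1

/-- The observation histories of all stations up to and including time `t`. -/
noncomputable def yH (g : StrategyP Z Y U) (t : ℕ) (ω : OmegaP T Z X W0 W WT) :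
    ∀ i, Fin (t + 1) → Y i :=
  (trajP f0 f ℓ g ω t).2.2.1

/-- The profile of current local states at time `t`. -/
noncomputable def xC (g : StrategyP Z Y U) (t : ℕ) (ω : OmegaP T Z X W0 W WT) : ∀ i, X i :=
  fun i => (trajP f0 f ℓ g ω t).2.1 i (Fin.last t)

/-- The past action profiles, strictly before time `t`. -/
noncomputable def uH (g : StrategyP Z Y U) (t : ℕ) (ω : OmegaP T Z X W0 W WT) :
    Fin t → ∀ j, U j :=
  fun s => (trajP f0 f ℓ g ω t).2.2.2 s.castSucc

/-- The action profile actually played at time `t`. -/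
noncomputable def uC (g : StrategyP Z Y U) (t : ℕ) (ω : OmegaP T Z X W0 W WT) : ∀ j, U j :=
  act g t (zH f0 f ℓ g t ω) (yH f0 f ℓ g t ω) (uH f0 f ℓ g t ω)

theorem traj_u_last (g : StrategyP Z Y U) (t : ℕ) (ω : OmegaP T Z X W0 W WT) :
    (trajP f0 f ℓ g ω t).2.2.2 (Fin.last t) = uC f0 f ℓ g t ω := by
  cases t with
  | zero =>
    funext j
    simp only [trajP, uC, act, zH, yH]
    congr 1
    funext s
    exact s.elim0
  | succ t =>
    have h : uH f0 f ℓ g (t + 1) ω = (trajP f0 f ℓ g ω t).2.2.2 := by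
      funext s
      simp [uH, trajP]
    funext j
    simp [trajP, uC, act, zH, yH, h]

theorem uH_succ (g : StrategyP Z Y U) (t : ℕ) (ω : OmegaP T Z X W0 W WT) :
    uH f0 f ℓ g (t + 1) ω = Fin.snoc (uH f0 f ℓ g t ω) (uC f0 f ℓ g t ω) := by
  have h : uH f0 f ℓ g (t + 1) ω = (trajP f0 f ℓ g ω t).2.2.2 := by
    funext s
    simp [uH, trajP]
  rw [h, ← traj_u_last]
  funext s
  refine Fin.lastCases ?_ (fun s => ?_) s <;> simp [uH]

theorem zH_succ (g : StrategyP Z Y U) (t : ℕ) (ht : t < T) (ω : OmegaP T Z X W0 W WT) :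
    zH f0 f ℓ g (t + 1) ω = Fin.snoc (zH f0 f ℓ g t ω)
      (f0 t (zH f0 f ℓ g t ω (Fin.last t)) (uC f0 f ℓ g t ω) (ω.2.2.1 ⟨t, ht⟩)) := by
  rw [← traj_u_last]
  simp [zH, trajP, ht]

theorem xC_succ (g : StrategyP Z Y U) (t : ℕ) (ht : t < T) (ω : OmegaP T Z X W0 W WT) :
    xC f0 f ℓ g (t + 1) ω = fun i =>
      f i t (zH f0 f ℓ g t ω (Fin.last t)) (xC f0 f ℓ g t ω i) (uC f0 f ℓ g t ω)
        (ω.2.2.2.1 i ⟨t, ht⟩) := by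
  rw [← traj_u_last]
  funext i
  simp [xC, zH, trajP, ht]

theorem yH_succ (g : StrategyP Z Y U) (t : ℕ) (ht : t + 1 < T) (ω : OmegaP T Z X W0 W WT) :
    yH f0 f ℓ g (t + 1) ω = fun i => Fin.snoc (yH f0 f ℓ g t ω i)
      (ℓ i (t + 1) (xC f0 f ℓ g (t + 1) ω i) (ω.2.2.2.2 i ⟨t + 1, ht⟩)) := by
  funext i
  simp [yH, xC, trajP, ht]

theorem zH_apply (g : StrategyP Z Y U) (t : ℕ) (ω : OmegaP T Z X W0 W WT) (s : Fin (t + 1)) :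
    zH f0 f ℓ g t ω s = ZpP f0 f ℓ g s ω := by
  induction t with
  | zero => obtain rfl : s = Fin.last 0 := Fin.ext (by simp); rfl
  | succ t ih =>
    refine Fin.lastCases ?_ (fun s => ?_) s
    · rfl
    · exact (by simp [zH, trajP] : zH f0 f ℓ g (t + 1) ω s.castSucc = zH f0 f ℓ g t ω s).trans
        (ih s)

theorem yH_apply (g : StrategyP Z Y U) (t : ℕ) (ω : OmegaP T Z X W0 W WT) (i : Fin n)
    (s : Fin (t + 1)) : yH f0 f ℓ g t ω i s = YpP f0 f ℓ g i s ω := by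
  induction t with
  | zero => obtain rfl : s = Fin.last 0 := Fin.ext (by simp); rfl
  | succ t ih =>
    refine Fin.lastCases ?_ (fun s => ?_) s
    · rfl
    · exact (by simp [yH, trajP] :
        yH f0 f ℓ g (t + 1) ω i s.castSucc = yH f0 f ℓ g t ω i s).trans (ih s)

theorem UpP_eq (g : StrategyP Z Y U) (t : ℕ) (ω : OmegaP T Z X W0 W WT) (i : Fin n) :
    UpP f0 f ℓ g i t ω = uC f0 f ℓ g t ω i := by
  rw [← traj_u_last]; rfl

theorem uH_apply (g : StrategyP Z Y U) (t : ℕ) (ω : OmegaP T Z X W0 W WT) (j : Fin n)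
    (s : Fin t) : uH f0 f ℓ g t ω s j = UpP f0 f ℓ g j s ω := by
  induction t with
  | zero => exact s.elim0
  | succ t ih =>
    rw [uH_succ]
    refine Fin.lastCases ?_ (fun s => ?_) s
    · rw [Fin.snoc_last, UpP_eq]; rfl
    · rw [Fin.snoc_castSucc]
      exact ih s

/-- Histories up to time `t` involve the plant noises before `t` and the observation noises up
to `t` only. -/
theorem hist_congr_noise (g : StrategyP Z Y U) (t : ℕ) (ht : t < T)
    (ω ω' : OmegaP T Z X W0 W WT) (h1 : ω.1 = ω'.1) (h2 : ω.2.1 = ω'.2.1)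
    (h3 : ∀ s : Fin T, s.val < t → ω.2.2.1 s = ω'.2.2.1 s)
    (h4 : ∀ i, ∀ s : Fin T, s.val < t → ω.2.2.2.1 i s = ω'.2.2.2.1 i s)
    (h5 : ∀ i, ∀ s : Fin T, s.val ≤ t → ω.2.2.2.2 i s = ω'.2.2.2.2 i s) :
    zH f0 f ℓ g t ω = zH f0 f ℓ g t ω' ∧ xC f0 f ℓ g t ω = xC f0 f ℓ g t ω' ∧
      yH f0 f ℓ g t ω = yH f0 f ℓ g t ω' ∧ uH f0 f ℓ g t ω = uH f0 f ℓ g t ω' := by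
  induction t with
  | zero =>
    refine ⟨?_, ?_, ?_, ?_⟩
    · funext s; exact h1
    · funext i; exact congrFun h2 i
    · simp [yH, trajP, h2, ht, h5]
    · funext s; exact s.elim0
  | succ t ih =>
    obtain ⟨iz, ix, iy, iu⟩ := ih (by omega) (fun s hs => h3 s (by omega))
      (fun i s hs => h4 i s (by omega)) (fun i s hs => h5 i s (by omega))
    have ic : uC f0 f ℓ g t ω = uC f0 f ℓ g t ω' := by simp only [uC, iz, iy, iu]
    have ix' : xC f0 f ℓ g (t + 1) ω = xC f0 f ℓ g (t + 1) ω' := by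
      rw [xC_succ f0 f ℓ g t (by omega), xC_succ f0 f ℓ g t (by omega), iz, ix, ic]
      funext i
      rw [h4 i ⟨t, by omega⟩ (by simp)]
    refine ⟨?_, ix', ?_, ?_⟩
    · rw [zH_succ f0 f ℓ g t (by omega), zH_succ f0 f ℓ g t (by omega), iz, ic,
        h3 ⟨t, by omega⟩ (by simp)]
    · rw [yH_succ f0 f ℓ g t ht, yH_succ f0 f ℓ g t ht, iy, ix']
      funext i
      rw [h5 i ⟨t + 1, ht⟩ (by simp)]
    · rw [uH_succ, uH_succ, iu, ic]

/-- Histories up to time `t` depend on the control laws before time `t` only. -/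
theorem hist_congr_strategy (g g' : StrategyP Z Y U) (t : ℕ) (ht : t < T)
    (hg : ∀ i, ∀ s < t, g i s = g' i s) (ω : OmegaP T Z X W0 W WT) :
    zH f0 f ℓ g t ω = zH f0 f ℓ g' t ω ∧ xC f0 f ℓ g t ω = xC f0 f ℓ g' t ω ∧
      yH f0 f ℓ g t ω = yH f0 f ℓ g' t ω ∧ uH f0 f ℓ g t ω = uH f0 f ℓ g' t ω := by
  induction t with
  | zero =>
    refine ⟨rfl, rfl, rfl, ?_⟩
    funext s; exact s.elim0
  | succ t ih =>
    obtain ⟨iz, ix, iy, iu⟩ := ih (by omega) (fun i s hs => hg i s (by omega))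
    have ic : uC f0 f ℓ g t ω = uC f0 f ℓ g' t ω := by
      funext j
      simp only [uC, act, iz, iy, iu, hg j t (by omega)]
    have ix' : xC f0 f ℓ g (t + 1) ω = xC f0 f ℓ g' (t + 1) ω := by
      rw [xC_succ f0 f ℓ g t (by omega), xC_succ f0 f ℓ g' t (by omega), iz, ix, ic]
    refine ⟨?_, ix', ?_, ?_⟩
    · rw [zH_succ f0 f ℓ g t (by omega), zH_succ f0 f ℓ g' t (by omega), iz, ic]
    · rw [yH_succ f0 f ℓ g t ht, yH_succ f0 f ℓ g' t ht, iy, ix']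
    · rw [uH_succ, uH_succ, iu, ic]

/-! ### Expectations of functions of the history -/

variable (PZ : Z → ℝ) (PX : ∀ i, Z → X i → ℝ) (PW0 : W0 → ℝ)
    (PW : ∀ i, W i → ℝ) (PWT : ∀ i, WT i → ℝ)

/-- The expectation, in the closed loop under `g`, of a function of the shared history, the
current local states, the observation histories and the past actions at time `t`. -/
noncomputable def EH (T : ℕ) (g : StrategyP Z Y U) (t : ℕ)
    (F : (Fin (t + 1) → Z) → (∀ i, X i) → (∀ i, Fin (t + 1) → Y i) →
      (Fin t → ∀ j, U j) → ℝ) : ℝ :=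
  ∑ ω : OmegaP T Z X W0 W WT, weightP PZ PX PW0 PW PWT ω *
    F (zH f0 f ℓ g t ω) (xC f0 f ℓ g t ω) (yH f0 f ℓ g t ω) (uH f0 f ℓ g t ω)

/-- The conditional expectation of a function of the history at time `t + 1`, given the history
at time `t` and the action profile `a`. -/
noncomputable def stepE (t : ℕ)
    (F : (Fin (t + 2) → Z) → (∀ i, X i) → (∀ i, Fin (t + 2) → Y i) →
      (Fin (t + 1) → ∀ j, U j) → ℝ)
    (z : Fin (t + 1) → Z) (x : ∀ i, X i) (y : ∀ i, Fin (t + 1) → Y i)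
    (u : Fin t → ∀ j, U j) (a : ∀ j, U j) : ℝ :=
  ∑ w0, PW0 w0 * ∑ w : ∀ i, W i, (∏ i, PW i (w i)) * ∑ v : ∀ i, WT i, (∏ i, PWT i (v i)) *
    F (Fin.snoc z (f0 t (z (Fin.last t)) a w0))
      (fun i => f i t (z (Fin.last t)) (x i) a (w i))
      (fun i => Fin.snoc (y i) (ℓ i (t + 1) (f i t (z (Fin.last t)) (x i) a (w i)) (v i)))
      (Fin.snoc u a)

theorem sum_omega (G : OmegaP T Z X W0 W WT → ℝ) :
    ∑ ω, weightP PZ PX PW0 PW PWT ω * G ω =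
      ∑ z, PZ z * ∑ x : ∀ i, X i, (∏ i, PX i z (x i)) *
        ∑ w0 : Fin T → W0, (∏ s, PW0 (w0 s)) *
          ∑ w : ∀ i, Fin T → W i, (∏ i, ∏ s, PW i (w i s)) *
            ∑ v : ∀ i, Fin T → WT i, (∏ i, ∏ s, PWT i (v i s)) * G (z, x, w0, w, v) := by
  simp only [Fintype.sum_prod_type, weightP, Finset.mul_sum, mul_assoc]

theorem sum_mul_comm {A B : Type} [Fintype A] [Fintype B] (p : A → ℝ) (q : B → ℝ)
    (G : A → B → ℝ) :
    ∑ a, p a * ∑ b, q b * G a b = ∑ b, q b * ∑ a, p a * G a b := by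
  simp_rw [Finset.mul_sum]
  rw [Finset.sum_comm]
  exact Finset.sum_congr rfl fun b _ => Finset.sum_congr rfl fun a _ => by ring

theorem resample_omega_v (hPWT : ∀ i, ∑ a, PWT i a = 1) (k : Fin T)
    (G : OmegaP T Z X W0 W WT → ℝ) :
    ∑ ω, weightP PZ PX PW0 PW PWT ω * G ω =
      ∑ ω, weightP PZ PX PW0 PW PWT ω * ∑ v : ∀ i, WT i, (∏ i, PWT i (v i)) *
        G (ω.1, ω.2.1, ω.2.2.1, ω.2.2.2.1, fun i => Function.update (ω.2.2.2.2 i) k (v i)) := by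
  rw [sum_omega, sum_omega]
  refine Finset.sum_congr rfl fun z _ => congrArg _ (Finset.sum_congr rfl fun x _ =>
    congrArg _ (Finset.sum_congr rfl fun w0 _ => congrArg _ (Finset.sum_congr rfl fun w _ =>
      congrArg _ ?_)))
  exact resample_pi PWT hPWT k fun v => G (z, x, w0, w, v)

theorem resample_omega_w (hPW : ∀ i, ∑ a, PW i a = 1) (k : Fin T)
    (G : OmegaP T Z X W0 W WT → ℝ) :
    ∑ ω, weightP PZ PX PW0 PW PWT ω * G ω =
      ∑ ω, weightP PZ PX PW0 PW PWT ω * ∑ w : ∀ i, W i, (∏ i, PW i (w i)) *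
        G (ω.1, ω.2.1, ω.2.2.1, (fun i => Function.update (ω.2.2.2.1 i) k (w i)),
          ω.2.2.2.2) := by
  rw [sum_omega, sum_omega]
  refine Finset.sum_congr rfl fun z _ => congrArg _ (Finset.sum_congr rfl fun x _ =>
    congrArg _ (Finset.sum_congr rfl fun w0 _ => congrArg _ ?_))
  rw [resample_pi PW hPW k]
  refine Finset.sum_congr rfl fun w _ => congrArg _ ?_
  rw [sum_mul_comm]

theorem resample_omega_w0 (hPW0 : ∑ a, PW0 a = 1) (k : Fin T)
    (G : OmegaP T Z X W0 W WT → ℝ) :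
    ∑ ω, weightP PZ PX PW0 PW PWT ω * G ω =
      ∑ ω, weightP PZ PX PW0 PW PWT ω * ∑ w0, PW0 w0 *
        G (ω.1, ω.2.1, Function.update ω.2.2.1 k w0, ω.2.2.2.1, ω.2.2.2.2) := by
  rw [sum_omega, sum_omega]
  refine Finset.sum_congr rfl fun z _ => congrArg _ (Finset.sum_congr rfl fun x _ =>
    congrArg _ ?_)
  rw [resample PW0 hPW0 k]
  refine Finset.sum_congr rfl fun w0 _ => congrArg _ ?_
  rw [sum_mul_comm]
  refine Finset.sum_congr rfl fun w _ => congrArg _ ?_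
  rw [sum_mul_comm]

/-- All plant noises at time `k` and all observation noises at time `k'` may be redrawn
independently without changing an expectation. -/
theorem resample_omega (hPW0 : ∑ a, PW0 a = 1) (hPW : ∀ i, ∑ a, PW i a = 1)
    (hPWT : ∀ i, ∑ a, PWT i a = 1) (k k' : Fin T) (G : OmegaP T Z X W0 W WT → ℝ) :
    ∑ ω, weightP PZ PX PW0 PW PWT ω * G ω =
      ∑ ω, weightP PZ PX PW0 PW PWT ω *
        ∑ w0, PW0 w0 * ∑ w : ∀ i, W i, (∏ i, PW i (w i)) *
          ∑ v : ∀ i, WT i, (∏ i, PWT i (v i)) *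
            G (ω.1, ω.2.1, Function.update ω.2.2.1 k w0,
              (fun i => Function.update (ω.2.2.2.1 i) k (w i)),
              (fun i => Function.update (ω.2.2.2.2 i) k' (v i))) := by
  rw [resample_omega_v PZ PX PW0 PW PWT hPWT k', resample_omega_w PZ PX PW0 PW PWT hPW k,
    resample_omega_w0 PZ PX PW0 PW PWT hPW0 k]

/-- The tower property: the noises driving the step from `t` to `t + 1` are independent of the history
at time `t`. -/
theorem EH_succ (hPW0 : ∑ a, PW0 a = 1) (hPW : ∀ i, ∑ a, PW i a = 1)
    (hPWT : ∀ i, ∑ a, PWT i a = 1) (g : StrategyP Z Y U) (t : ℕ) (ht : t + 1 < T)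
    (F : (Fin (t + 2) → Z) → (∀ i, X i) → (∀ i, Fin (t + 2) → Y i) →
      (Fin (t + 1) → ∀ j, U j) → ℝ) :
    EH f0 f ℓ PZ PX PW0 PW PWT T g (t + 1) F =
      EH f0 f ℓ PZ PX PW0 PW PWT T g t
        (fun z x y u => stepE f0 f ℓ PW0 PW PWT t F z x y u (act g t z y u)) := by
  unfold EH
  rw [resample_omega PZ PX PW0 PW PWT hPW0 hPW hPWT ⟨t, by omega⟩ ⟨t + 1, ht⟩]
  refine Finset.sum_congr rfl fun ω _ => ?_
  congr 1
  unfold stepE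
  refine Finset.sum_congr rfl fun w0 _ => ?_
  congr 1
  refine Finset.sum_congr rfl fun w _ => ?_
  congr 1
  refine Finset.sum_congr rfl fun v _ => ?_
  congr 1
  set ω' : OmegaP T Z X W0 W WT := (ω.1, ω.2.1, Function.update ω.2.2.1 ⟨t, by omega⟩ w0,
              (fun i => Function.update (ω.2.2.2.1 i) ⟨t, by omega⟩ (w i)),
              (fun i => Function.update (ω.2.2.2.2 i) ⟨t + 1, ht⟩ (v i))) with hω'
  obtain ⟨iz, ix, iy, iu⟩ := hist_congr_noise f0 f ℓ g t (by omega) ω' ω rfl rfl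
    (fun s hs => Function.update_of_ne (Fin.ne_of_val_ne (by simp; omega)) _ _)
    (fun i s hs => Function.update_of_ne (Fin.ne_of_val_ne (by simp; omega)) _ _)
    (fun i s hs => Function.update_of_ne (Fin.ne_of_val_ne (by simp; omega)) _ _)
  have ic : uC f0 f ℓ g t ω' = uC f0 f ℓ g t ω := by simp only [uC, iz, iy, iu]
  rw [yH_succ f0 f ℓ g t ht, zH_succ f0 f ℓ g t (by omega), xC_succ f0 f ℓ g t (by omega),
    uH_succ, iz, ix, iy, iu, ic]
  simp [hω', uC]

/-- The initial history involves the initial states and the first observation noises only. -/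
theorem EH_zero (hPW0 : ∑ a, PW0 a = 1) (hPW : ∀ i, ∑ a, PW i a = 1)
    (hPWT : ∀ i, ∑ a, PWT i a = 1) (g : StrategyP Z Y U) (hT : 0 < T)
    (F : (Fin 1 → Z) → (∀ i, X i) → (∀ i, Fin 1 → Y i) → (Fin 0 → ∀ j, U j) → ℝ) :
    EH f0 f ℓ PZ PX PW0 PW PWT T g 0 F =
      ∑ z, PZ z * ∑ x : ∀ i, X i, (∏ i, PX i z (x i)) *
        ∑ v : ∀ i, WT i, (∏ i, PWT i (v i)) *
          F (fun _ => z) x (fun i _ => ℓ i 0 (x i) (v i)) (fun s => s.elim0) := by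
  unfold EH
  rw [resample_omega_v PZ PX PW0 PW PWT hPWT ⟨0, hT⟩, sum_omega]
  refine Finset.sum_congr rfl fun z _ => ?_
  congr 1
  refine Finset.sum_congr rfl fun x _ => ?_
  congr 1
  have hu : ∀ ω : OmegaP T Z X W0 W WT, uH f0 f ℓ g 0 ω = fun s => s.elim0 := fun ω => by
    funext s; exact s.elim0
  have hx : ∀ ω : OmegaP T Z X W0 W WT, xC f0 f ℓ g 0 ω = ω.2.1 := fun _ => rfl
  simp only [zH, hx, yH, trajP, hT, hu, dif_pos, Function.update_self]
  rw [← Finset.sum_mul, sum_prod_law PW0 hPW0, one_mul, ← Finset.sum_mul,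
    sum_prod_laws PW hPW, one_mul, ← Finset.sum_mul, sum_prod_laws PWT hPWT, one_mul]

/-! ### Beliefs and the factorisation of the law of the history -/

/-- Transition weights of the shared state. -/
noncomputable def kerZ (t : ℕ) (z : Z) (a : ∀ j, U j) (z' : Z) : ℝ :=
  ∑ w, if f0 t z a w = z' then PW0 w else 0

/-- Transition weights of the local state of station `i`. -/
noncomputable def kerX (i : Fin n) (t : ℕ) (z : Z) (a : ∀ j, U j) (x x' : X i) : ℝ :=
  ∑ w, if f i t z x a w = x' then PW i w else 0

/-- Observation weights of station `i`. -/
noncomputable def kerY (i : Fin n) (t : ℕ) (x : X i) (y : Y i) : ℝ :=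
  ∑ w, if ℓ i t x w = y then PWT i w else 0

/-- Rescaling of a weight function to total mass one; the zero function is left unchanged, by the
convention `0 / 0 = 0`. -/
noncomputable def normalize {A : Type} [Fintype A] (v : A → ℝ) : A → ℝ :=
  fun a => v a / ∑ b, v b

/-- One step of the unnormalized nonlinear filter of station `i`: prediction through the local
dynamics followed by weighting with the new observation. -/
noncomputable def filt (i : Fin n) (t : ℕ) (z : Z) (a : ∀ j, U j) (y : Y i) (p : X i → ℝ) :
    X i → ℝ :=
  fun x' => kerY ℓ PWT i (t + 1) x' y * ∑ x, kerX f PW i t z a x x' * p x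

/-- The filter of station `i` as a function of its histories. No strategy enters. -/
noncomputable def belief (i : Fin n) : (t : ℕ) → (Fin (t + 1) → Z) → (Fin (t + 1) → Y i) →
    (Fin t → ∀ j, U j) → X i → ℝ
  | 0, z, y, _ => normalize fun x => PX i (z 0) x * kerY ℓ PWT i 0 x (y 0)
  | t + 1, z, y, u => normalize (filt f ℓ PW PWT i t (Fin.init z (Fin.last t)) (u (Fin.last t))
      (y (Fin.last (t + 1))) (belief i t (Fin.init z) (Fin.init y) (Fin.init u)))

/-- The factor contributed by station `i` to the probability of a history, as a function of its
current local state. The indicator expresses that the recorded actions of station `i` are those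
prescribed by `g`. -/
noncomputable def lik (g : StrategyP Z Y U) (i : Fin n) : (t : ℕ) → (Fin (t + 1) → Z) →
    (Fin (t + 1) → Y i) → (Fin t → ∀ j, U j) → X i → ℝ
  | 0, z, y, _ => fun x => PX i (z 0) x * kerY ℓ PWT i 0 x (y 0)
  | t + 1, z, y, u => fun x' =>
      (if u (Fin.last t) i = g i t (Fin.init z) (Fin.init y) (Fin.init u) then 1 else 0) *
      filt f ℓ PW PWT i t (Fin.init z (Fin.last t)) (u (Fin.last t))
        (y (Fin.last (t + 1))) (lik g i t (Fin.init z) (Fin.init y) (Fin.init u)) x'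

/-- The factor contributed by the shared state to the probability of a history. -/
noncomputable def pubw : (t : ℕ) → (Fin (t + 1) → Z) → (Fin t → ∀ j, U j) → ℝ
  | 0, z, _ => PZ (z 0)
  | t + 1, z, u => pubw t (Fin.init z) (Fin.init u) *
      kerZ f0 PW0 t (Fin.init z (Fin.last t)) (u (Fin.last t)) (z (Fin.last (t + 1)))

/-- The probability of a history under the strategy `g`, in product form. -/
noncomputable def dens (g : StrategyP Z Y U) (t : ℕ) (z : Fin (t + 1) → Z) (x : ∀ i, X i)
    (y : ∀ i, Fin (t + 1) → Y i) (u : Fin t → ∀ j, U j) : ℝ :=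
  pubw f0 PZ PW0 t z u * ∏ i, lik f ℓ PX PW PWT g i t z (y i) u (x i)

theorem sum_fin_one {A : Type} [Fintype A] (G : (Fin 1 → A) → ℝ) :
    ∑ v, G v = ∑ a, G (fun _ => a) :=
  (Equiv.sum_comp (Equiv.funUnique (Fin 1) A).symm G).symm

theorem sum_fin_one_pi {k : ℕ} {A : Fin k → Type} [∀ i, Fintype (A i)]
    (G : (∀ i, Fin 1 → A i) → ℝ) :
    ∑ v, G v = ∑ a : ∀ i, A i, G (fun i _ => a i) := by
  rw [sum_piComm, sum_fin_one]

/-- One step of the history in terms of the transition weights. -/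
theorem stepE_eq (t : ℕ)
    (F : (Fin (t + 2) → Z) → (∀ i, X i) → (∀ i, Fin (t + 2) → Y i) →
      (Fin (t + 1) → ∀ j, U j) → ℝ)
    (z : Fin (t + 1) → Z) (x : ∀ i, X i) (y : ∀ i, Fin (t + 1) → Y i)
    (u : Fin t → ∀ j, U j) (a : ∀ j, U j) :
    stepE f0 f ℓ PW0 PW PWT t F z x y u a =
      ∑ z', kerZ f0 PW0 t (z (Fin.last t)) a z' *
        ∑ x' : ∀ i, X i, (∏ i, kerX f PW i t (z (Fin.last t)) a (x i) (x' i)) *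
          ∑ y' : ∀ i, Y i, (∏ i, kerY ℓ PWT i (t + 1) (x' i) (y' i)) *
            F (Fin.snoc z z') x' (fun i => Fin.snoc (y i) (y' i)) (Fin.snoc u a) := by
  unfold stepE
  rw [sum_push PW0 (fun w0 => f0 t (z (Fin.last t)) a w0) (fun z' => ∑ w : ∀ i, W i,
    (∏ i, PW i (w i)) * ∑ v : ∀ i, WT i, (∏ i, PWT i (v i)) *
    F (Fin.snoc z z')
      (fun i => f i t (z (Fin.last t)) (x i) a (w i))
      (fun i => Fin.snoc (y i) (ℓ i (t + 1) (f i t (z (Fin.last t)) (x i) a (w i)) (v i)))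
      (Fin.snoc u a))]
  refine Finset.sum_congr rfl fun z' _ => congrArg _ ?_
  rw [sum_push_pi PW (fun i w => f i t (z (Fin.last t)) (x i) a w) (fun x' =>
    ∑ v : ∀ i, WT i, (∏ i, PWT i (v i)) *
    F (Fin.snoc z z') x' (fun i => Fin.snoc (y i) (ℓ i (t + 1) (x' i) (v i))) (Fin.snoc u a))]
  refine Finset.sum_congr rfl fun x' _ => congrArg _ ?_
  exact sum_push_pi PWT (fun i v => ℓ i (t + 1) (x' i) v) (fun y' =>
    F (Fin.snoc z z') x' (fun i => Fin.snoc (y i) (y' i)) (Fin.snoc u a))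

/-- The product form of the law of the history is propagated by one step of the closed loop: the
sum over the profile of current local states factors over the stations. -/
theorem dens_succ (g : StrategyP Z Y U) (t : ℕ) (z : Fin (t + 1) → Z) (z' : Z) (x' : ∀ i, X i)
    (y : ∀ i, Fin (t + 1) → Y i) (y' : ∀ i, Y i) (u : Fin t → ∀ j, U j) (a : ∀ j, U j) :
    dens f0 f ℓ PZ PX PW0 PW PWT g (t + 1) (Fin.snoc z z') x'
        (fun i => Fin.snoc (y i) (y' i)) (Fin.snoc u a) =
      if a = act g t z y u then
        ∑ x : ∀ i, X i, dens f0 f ℓ PZ PX PW0 PW PWT g t z x y u *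
          (kerZ f0 PW0 t (z (Fin.last t)) a z' *
          ((∏ i, kerX f PW i t (z (Fin.last t)) a (x i) (x' i)) *
            ∏ i, kerY ℓ PWT i (t + 1) (x' i) (y' i)))
      else 0 := by
  simp only [dens, lik, pubw, filt, Fin.init_snoc, Fin.snoc_last]
  rw [Finset.prod_mul_distrib]
  split_ifs with h
  · have h1 : ∏ i, (if a i = g i t z (y i) u then (1 : ℝ) else 0) = 1 :=
      Finset.prod_eq_one fun i _ => if_pos (congrFun h i)
    rw [h1, one_mul, Finset.prod_mul_distrib, Fintype.prod_sum, Finset.mul_sum, Finset.mul_sum]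
    refine Finset.sum_congr rfl fun x _ => ?_
    rw [Finset.prod_mul_distrib]
    ring
  · obtain ⟨i, hi⟩ := Function.ne_iff.mp h
    have h1 : ∏ i, (if a i = g i t z (y i) u then (1 : ℝ) else 0) = 0 :=
      Finset.prod_eq_zero (Finset.mem_univ i) (if_neg hi)
    rw [h1]; ring

/-- The law of the history under `g` has the product form `dens`. -/
theorem EH_eq (hPW0 : ∑ a, PW0 a = 1) (hPW : ∀ i, ∑ a, PW i a = 1)
    (hPWT : ∀ i, ∑ a, PWT i a = 1) (g : StrategyP Z Y U) (t : ℕ) (ht : t < T)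
    (F : (Fin (t + 1) → Z) → (∀ i, X i) → (∀ i, Fin (t + 1) → Y i) →
      (Fin t → ∀ j, U j) → ℝ) :
    EH f0 f ℓ PZ PX PW0 PW PWT T g t F =
      ∑ z, ∑ x, ∑ y, ∑ u, dens f0 f ℓ PZ PX PW0 PW PWT g t z x y u * F z x y u := by
  induction t with
  | zero =>
    rw [EH_zero f0 f ℓ PZ PX PW0 PW PWT hPW0 hPW hPWT g ht, sum_fin_one]
    refine Finset.sum_congr rfl fun z _ => ?_
    rw [Finset.mul_sum]
    refine Finset.sum_congr rfl fun x _ => ?_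
    rw [sum_push_pi PWT (fun i v => ℓ i 0 (x i) v)
      (fun y' => F (fun _ => z) x (fun i _ => y' i) (fun s => s.elim0)), sum_fin_one_pi,
      Finset.mul_sum, Finset.mul_sum]
    refine Finset.sum_congr rfl fun y _ => ?_
    have hu : ∀ G : (Fin 0 → ∀ j, U j) → ℝ, ∑ u, G u = G (fun s => s.elim0) :=
      fun G => Fintype.sum_subsingleton G _
    rw [hu]
    simp only [dens, pubw, lik, Finset.prod_mul_distrib, kerY]
    ring
  | succ t ih =>
    rw [EH_succ f0 f ℓ PZ PX PW0 PW PWT hPW0 hPW hPWT g t ht, ih (by omega)]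
    simp_rw [stepE_eq, Finset.mul_sum]
    rw [sum_reorder]
    conv_rhs => rw [sum_snoc]
    refine Finset.sum_congr rfl fun z _ => Finset.sum_congr rfl fun z' _ =>
      Finset.sum_congr rfl fun x' _ => ?_
    conv_rhs => rw [sum_snoc_pi (A := Y)]
    refine Finset.sum_congr rfl fun y _ => Finset.sum_congr rfl fun y' _ => ?_
    conv_rhs => rw [sum_snoc]
    refine Finset.sum_congr rfl fun u _ => ?_
    simp_rw [dens_succ, ite_mul, zero_mul]
    rw [Finset.sum_ite_eq' Finset.univ (act g t z y u), if_pos (Finset.mem_univ _),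
      Finset.sum_mul]
    refine Finset.sum_congr rfl fun x _ => ?_
    ring

/-- For nonnegative weights this holds for total mass zero as well, all weights being zero then. -/
theorem mul_normalize {A : Type} [Fintype A] (v : A → ℝ) (hv : ∀ a, 0 ≤ v a) (a : A) :
    v a = (∑ b, v b) * normalize v a := by
  unfold normalize
  by_cases h : ∑ b, v b = 0
  · rw [h, zero_mul]
    exact (Finset.sum_eq_zero_iff_of_nonneg fun b _ => hv b).mp h a (Finset.mem_univ a)
  · field_simp

theorem kerY_nonneg (hPWT : ∀ i a, 0 ≤ PWT i a) (i : Fin n) (t : ℕ) (x : X i) (y : Y i) :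
    0 ≤ kerY ℓ PWT i t x y :=
  Finset.sum_nonneg fun w _ => by split_ifs <;> simp [hPWT]

theorem filt_nonneg (hPW : ∀ i a, 0 ≤ PW i a) (hPWT : ∀ i a, 0 ≤ PWT i a) (i : Fin n) (t : ℕ)
    (z : Z) (a : ∀ j, U j) (y : Y i) (p : X i → ℝ) (hp : ∀ x, 0 ≤ p x) (x' : X i) :
    0 ≤ filt f ℓ PW PWT i t z a y p x' :=
  mul_nonneg (kerY_nonneg ℓ PWT hPWT i _ _ _) (Finset.sum_nonneg fun x _ =>
    mul_nonneg (Finset.sum_nonneg fun w _ => by split_ifs <;> simp [hPW]) (hp x))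

theorem lik_nonneg (hPX : ∀ i z a, 0 ≤ PX i z a) (hPW : ∀ i a, 0 ≤ PW i a)
    (hPWT : ∀ i a, 0 ≤ PWT i a) (g : StrategyP Z Y U) (i : Fin n) (t : ℕ)
    (z : Fin (t + 1) → Z) (y : Fin (t + 1) → Y i) (u : Fin t → ∀ j, U j) (x : X i) :
    0 ≤ lik f ℓ PX PW PWT g i t z y u x := by
  induction t generalizing x with
  | zero => exact mul_nonneg (hPX _ _ _) (kerY_nonneg ℓ PWT hPWT i _ _ _)
  | succ t ih =>
    exact mul_nonneg (by split_ifs <;> simp)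
      (filt_nonneg f ℓ PW PWT hPW hPWT i t _ _ _ _ (fun x => ih _ _ _ x) x)

theorem normalize_nonneg {A : Type} [Fintype A] (v : A → ℝ) (hv : ∀ a, 0 ≤ v a) (a : A) :
    0 ≤ normalize v a :=
  div_nonneg (hv a) (Finset.sum_nonneg fun b _ => hv b)

theorem belief_nonneg (hPX : ∀ i z a, 0 ≤ PX i z a) (hPW : ∀ i a, 0 ≤ PW i a)
    (hPWT : ∀ i a, 0 ≤ PWT i a) (i : Fin n) (t : ℕ)
    (z : Fin (t + 1) → Z) (y : Fin (t + 1) → Y i) (u : Fin t → ∀ j, U j) (x : X i) :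
    0 ≤ belief f ℓ PX PW PWT i t z y u x := by
  induction t generalizing x with
  | zero =>
    exact normalize_nonneg _ (fun x => mul_nonneg (hPX _ _ _) (kerY_nonneg ℓ PWT hPWT i _ _ _)) x
  | succ t ih =>
    exact normalize_nonneg _
      (fun x => filt_nonneg f ℓ PW PWT hPW hPWT i t _ _ _ _ (fun x => ih _ _ _ x) x) x

theorem filt_smul (i : Fin n) (t : ℕ) (z : Z) (a : ∀ j, U j) (y : Y i) (r : ℝ) (p : X i → ℝ)
    (x' : X i) : filt f ℓ PW PWT i t z a y (fun x => r * p x) x' =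
      r * filt f ℓ PW PWT i t z a y p x' := by
  simp only [filt, Finset.mul_sum]
  exact Finset.sum_congr rfl fun x _ => by ring

/-- The strategy enters the factor of station `i` only through a scalar: the factor is
proportional to the belief, which is computed without reference to any strategy. -/
theorem lik_eq (hPX : ∀ i z a, 0 ≤ PX i z a) (hPW : ∀ i a, 0 ≤ PW i a)
    (hPWT : ∀ i a, 0 ≤ PWT i a) (g : StrategyP Z Y U) (i : Fin n) (t : ℕ)
    (z : Fin (t + 1) → Z) (y : Fin (t + 1) → Y i) (u : Fin t → ∀ j, U j) (x : X i) :
    lik f ℓ PX PW PWT g i t z y u x =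
      (∑ x', lik f ℓ PX PW PWT g i t z y u x') * belief f ℓ PX PW PWT i t z y u x := by
  induction t generalizing x with
  | zero =>
    exact mul_normalize (fun x => PX i (z 0) x * kerY ℓ PWT i 0 x (y 0))
      (fun x => mul_nonneg (hPX _ _ _) (kerY_nonneg ℓ PWT hPWT i _ _ _)) x
  | succ t ih =>
    have h1 : lik f ℓ PX PW PWT g i t (Fin.init z) (Fin.init y) (Fin.init u) = fun x =>
        (∑ x', lik f ℓ PX PW PWT g i t (Fin.init z) (Fin.init y) (Fin.init u) x') *
          belief f ℓ PX PW PWT i t (Fin.init z) (Fin.init y) (Fin.init u) x :=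
      funext fun x => ih _ _ _ x
    simp only [lik]
    rw [h1]
    simp only [filt_smul, ← Finset.mul_sum]
    rw [mul_normalize (filt f ℓ PW PWT i t _ _ _ _) (fun x => filt_nonneg f ℓ PW PWT hPW hPWT i t
      _ _ _ _ (belief_nonneg f ℓ PX PW PWT hPX hPW hPWT i t _ _ _) x) x]
    simp only [belief]
    ring

/-- The filter is recursive: equal beliefs stay equal after the same new data. -/
theorem belief_snoc_congr (i : Fin n) (t : ℕ) (z : Fin (t + 1) → Z) (y y' : Fin (t + 1) → Y i)
    (u : Fin t → ∀ j, U j) (z' : Z) (b : Y i) (a : ∀ j, U j)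
    (h : belief f ℓ PX PW PWT i t z y u = belief f ℓ PX PW PWT i t z y' u) :
    belief f ℓ PX PW PWT i (t + 1) (Fin.snoc z z') (Fin.snoc y b) (Fin.snoc u a) =
      belief f ℓ PX PW PWT i (t + 1) (Fin.snoc z z') (Fin.snoc y' b) (Fin.snoc u a) := by
  simp only [belief, Fin.init_snoc, Fin.snoc_last, h]

/-! ### Cost-to-go -/

variable (c : ℕ → Z → (∀ i, X i) → (∀ i, U i) → ℝ)

/-- The expected cost over `k` periods from time `t` on, given the history at time `t`. -/
noncomputable def value (g : StrategyP Z Y U) : (k t : ℕ) → (Fin (t + 1) → Z) → (∀ i, X i) →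
    (∀ i, Fin (t + 1) → Y i) → (Fin t → ∀ j, U j) → ℝ
  | 0, _, _, _, _, _ => 0
  | k + 1, t, z, x, y, u => c t (z (Fin.last t)) x (act g t z y u) +
      stepE f0 f ℓ PW0 PW PWT t (value g k (t + 1)) z x y u (act g t z y u)

theorem EH_add (g : StrategyP Z Y U) (t : ℕ)
    (F G : (Fin (t + 1) → Z) → (∀ i, X i) → (∀ i, Fin (t + 1) → Y i) →
      (Fin t → ∀ j, U j) → ℝ) :
    EH f0 f ℓ PZ PX PW0 PW PWT T g t (fun z x y u => F z x y u + G z x y u) =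
      EH f0 f ℓ PZ PX PW0 PW PWT T g t F + EH f0 f ℓ PZ PX PW0 PW PWT T g t G := by
  simp only [EH, mul_add, Finset.sum_add_distrib]

/-- The expected cost from time `t` to the horizon is the expected cost-to-go at time `t`. -/
theorem value_spec (hPW0 : ∑ a, PW0 a = 1) (hPW : ∀ i, ∑ a, PW i a = 1)
    (hPWT : ∀ i, ∑ a, PWT i a = 1) (g : StrategyP Z Y U) (k t : ℕ) (hkt : t + k = T) :
    ∑ s ∈ Finset.Ico t T, EH f0 f ℓ PZ PX PW0 PW PWT T g s
        (fun z x y u => c s (z (Fin.last s)) x (act g s z y u)) =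
      EH f0 f ℓ PZ PX PW0 PW PWT T g t (value f0 f ℓ PW0 PW PWT c g k t) := by
  induction k generalizing t with
  | zero =>
    obtain rfl : t = T := by omega
    simp [EH, value]
  | succ k ih =>
    rw [Finset.sum_eq_sum_Ico_succ_bot (by omega), ih (t + 1) (by omega)]
    rcases k with _ | k
    · simp [EH, value, stepE]
    · rw [EH_succ f0 f ℓ PZ PX PW0 PW PWT hPW0 hPW hPWT g t (by omega), ← EH_add]
      rfl

theorem JP_eq (g : StrategyP Z Y U) :
    JP f0 f ℓ c (weightP (T := T) PZ PX PW0 PW PWT) g =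
      ∑ s ∈ Finset.range T, EH f0 f ℓ PZ PX PW0 PW PWT T g s
        (fun z x y u => c s (z (Fin.last s)) x (act g s z y u)) := by
  simp only [JP, EH]
  rw [Finset.sum_comm]
  refine Finset.sum_congr rfl fun ω _ => ?_
  rw [Finset.mul_sum]
  refine Finset.sum_congr rfl fun s _ => ?_
  have : (fun i => UpP f0 f ℓ g i s ω) = uC f0 f ℓ g s ω :=
    funext fun i => UpP_eq f0 f ℓ g s ω i
  rw [this]
  rfl

/-- The total cost is the expected cost before time `t` plus the expected cost-to-go at time `t`. -/
theorem JP_split (hPW0 : ∑ a, PW0 a = 1) (hPW : ∀ i, ∑ a, PW i a = 1)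
    (hPWT : ∀ i, ∑ a, PWT i a = 1) (g : StrategyP Z Y U) (k t : ℕ) (hkt : t + k = T) :
    JP f0 f ℓ c (weightP (T := T) PZ PX PW0 PW PWT) g =
      ∑ s ∈ Finset.range t, EH f0 f ℓ PZ PX PW0 PW PWT T g s
        (fun z x y u => c s (z (Fin.last s)) x (act g s z y u)) +
      EH f0 f ℓ PZ PX PW0 PW PWT T g t (value f0 f ℓ PW0 PW PWT c g k t) := by
  rw [JP_eq, ← value_spec f0 f ℓ PZ PX PW0 PW PWT c hPW0 hPW hPWT g k t hkt,
    Finset.sum_range_add_sum_Ico _ (by omega)]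

/-- The law of the history at time `t` depends on the control laws before time `t` only. -/
theorem EH_congr_strategy (g g' : StrategyP Z Y U) (t : ℕ) (ht : t < T)
    (hg : ∀ i, ∀ s < t, g i s = g' i s)
    (F : (Fin (t + 1) → Z) → (∀ i, X i) → (∀ i, Fin (t + 1) → Y i) →
      (Fin t → ∀ j, U j) → ℝ) :
    EH f0 f ℓ PZ PX PW0 PW PWT T g t F = EH f0 f ℓ PZ PX PW0 PW PWT T g' t F := by
  refine Finset.sum_congr rfl fun ω _ => ?_
  obtain ⟨iz, ix, iy, iu⟩ := hist_congr_strategy f0 f ℓ g g' t ht hg ω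
  rw [iz, ix, iy, iu]

/-- The cost-to-go at time `t` depends on the control laws from time `t` on only. -/
theorem value_congr_strategy (g g' : StrategyP Z Y U) (k t : ℕ)
    (hg : ∀ i, ∀ s, t ≤ s → g i s = g' i s) :
    value f0 f ℓ PW0 PW PWT c g k t = value f0 f ℓ PW0 PW PWT c g' k t := by
  induction k generalizing t with
  | zero => rfl
  | succ k ih =>
    funext z x y u
    have ha : act g t z y u = act g' t z y u := funext fun j => by
      simp only [act, hg j t le_rfl]
    simp only [value, ha, ih (t + 1) fun i s hs => hg i s (by omega)]

/-- The control law of station `i` at time `t` uses its own observations only through its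
belief. -/
def Structured (i : Fin n) (t : ℕ) (g : StrategyP Z Y U) : Prop :=
  ∀ z y y' u, belief f ℓ PX PW PWT i t z y u = belief f ℓ PX PW PWT i t z y' u →
    g i t z y u = g i t z y' u

/-- If station `i` acts through its belief from time `t` on, then its belief is all that matters
about its past observations for the cost-to-go. -/
theorem value_congr_belief (g : StrategyP Z Y U) (i : Fin n) (k t : ℕ)
    (hs : ∀ s, t ≤ s → s < t + k → Structured f ℓ PX PW PWT i s g)
    (z : Fin (t + 1) → Z) (x : ∀ i, X i) (y y' : ∀ i, Fin (t + 1) → Y i)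
    (u : Fin t → ∀ j, U j)
    (hi : belief f ℓ PX PW PWT i t z (y i) u = belief f ℓ PX PW PWT i t z (y' i) u)
    (hj : ∀ j, j ≠ i → y j = y' j) :
    value f0 f ℓ PW0 PW PWT c g k t z x y u = value f0 f ℓ PW0 PW PWT c g k t z x y' u := by
  induction k generalizing t x with
  | zero => rfl
  | succ k ih =>
    have ha : act g t z y u = act g t z y' u := by
      funext j
      by_cases h : j = i
      · subst h
        exact hs t le_rfl (by omega) z _ _ u hi
      · simp only [act, hj j h]
    simp only [value, ha, stepE]
    congr 1
    refine Finset.sum_congr rfl fun w0 _ => congrArg _ (Finset.sum_congr rfl fun w _ =>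
      congrArg _ (Finset.sum_congr rfl fun v _ => congrArg _ ?_))
    refine ih (t + 1) (fun s h1 h2 => hs s (by omega) (by omega)) _ _ _ _ _ ?_ ?_
    · exact belief_snoc_congr f ℓ PX PW PWT i t z _ _ u _ _ _ hi
    · intro j h
      simp only [hj j h]

/-- The version of `value_congr_belief` in which the action profile at time `t` is prescribed, so that
no structure is needed at time `t` itself. -/
theorem stepE_value_congr_belief (g : StrategyP Z Y U) (i : Fin n) (k t : ℕ)
    (hs : ∀ s, t < s → s < t + 1 + k → Structured f ℓ PX PW PWT i s g)
    (z : Fin (t + 1) → Z) (x : ∀ i, X i) (y y' : ∀ i, Fin (t + 1) → Y i)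
    (u : Fin t → ∀ j, U j) (a : ∀ j, U j)
    (hi : belief f ℓ PX PW PWT i t z (y i) u = belief f ℓ PX PW PWT i t z (y' i) u)
    (hj : ∀ j, j ≠ i → y j = y' j) :
    stepE f0 f ℓ PW0 PW PWT t (value f0 f ℓ PW0 PW PWT c g k (t + 1)) z x y u a =
      stepE f0 f ℓ PW0 PW PWT t (value f0 f ℓ PW0 PW PWT c g k (t + 1)) z x y' u a := by
  unfold stepE
  refine Finset.sum_congr rfl fun w0 _ => congrArg _ (Finset.sum_congr rfl fun w _ =>
    congrArg _ (Finset.sum_congr rfl fun v _ => congrArg _ ?_))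
  refine value_congr_belief f0 f ℓ PX PW0 PW PWT c g i k (t + 1)
    (fun s h1 h2 => hs s (by omega) h2) _ _ _ _ _ ?_ ?_
  · exact belief_snoc_congr f ℓ PX PW PWT i t z _ _ u _ _ _ hi
  · intro j h
    simp only [hj j h]

/-! ### Replacing one control law -/

/-- The strategy `g` with the law of station `i` at time `t` replaced by `γ`. -/
def replaceLaw (g : StrategyP Z Y U) (i : Fin n) (t : ℕ)
    (γ : (Fin (t + 1) → Z) → (Fin (t + 1) → Y i) → (Fin t → ∀ j, U j) → U i) :
    StrategyP Z Y U :=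
  Function.update (β := fun i => ∀ t : ℕ, (Fin (t + 1) → Z) → (Fin (t + 1) → Y i) →
    (Fin t → ∀ j, U j) → U i) g i (Function.update (g i) t γ)

theorem replaceLaw_time (g : StrategyP Z Y U) (i : Fin n) (t : ℕ)
    (γ : (Fin (t + 1) → Z) → (Fin (t + 1) → Y i) → (Fin t → ∀ j, U j) → U i)
    (j : Fin n) (s : ℕ) (h : s ≠ t) : replaceLaw g i t γ j s = g j s := by
  by_cases hj : j = i
  · subst hj
    exact (congrFun (Function.update_self j _ g) s).trans (Function.update_of_ne h _ _)
  · exact congrFun (Function.update_of_ne hj _ g) s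

theorem replaceLaw_station (g : StrategyP Z Y U) (i : Fin n) (t : ℕ)
    (γ : (Fin (t + 1) → Z) → (Fin (t + 1) → Y i) → (Fin t → ∀ j, U j) → U i)
    (j : Fin n) (s : ℕ) (h : j ≠ i) : replaceLaw g i t γ j s = g j s := by
  exact congrFun (Function.update_of_ne h _ g) s

theorem replaceLaw_self (g : StrategyP Z Y U) (i : Fin n) (t : ℕ)
    (γ : (Fin (t + 1) → Z) → (Fin (t + 1) → Y i) → (Fin t → ∀ j, U j) → U i) :
    replaceLaw g i t γ i t = γ := by
  exact (congrFun (Function.update_self i _ g) t).trans (Function.update_self _ _ _)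

theorem act_replaceLaw (g : StrategyP Z Y U) (i : Fin n) (t : ℕ)
    (γ : (Fin (t + 1) → Z) → (Fin (t + 1) → Y i) → (Fin t → ∀ j, U j) → U i)
    (z : Fin (t + 1) → Z) (y : ∀ i, Fin (t + 1) → Y i) (u : Fin t → ∀ j, U j) :
    act (replaceLaw g i t γ) t z y u = Function.update (act g t z y u) i (γ z (y i) u) := by
  funext j
  by_cases hj : j = i
  · subst hj; simp [act, replaceLaw_self]
  · simp [act, hj, replaceLaw_station g i t γ j t hj]

/-- One dynamic-programming step: when station `i` acts through its belief after time `t`, its law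
at time `t` can be replaced by one that acts through the belief as well, at no additional cost. -/
theorem improve (hPX : ∀ i z a, 0 ≤ PX i z a) (hPW' : ∀ i a, 0 ≤ PW i a)
    (hPWT' : ∀ i a, 0 ≤ PWT i a) (hPW0 : ∑ a, PW0 a = 1) (hPW : ∀ i, ∑ a, PW i a = 1)
    (hPWT : ∀ i, ∑ a, PWT i a = 1) (g : StrategyP Z Y U) (i : Fin n) (t : ℕ) (ht : t < T)
    (hs : ∀ s, t < s → s < T → Structured f ℓ PX PW PWT i s g) :
    ∃ γ, Structured f ℓ PX PW PWT i t (replaceLaw g i t γ) ∧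
      JP f0 f ℓ c (weightP (T := T) PZ PX PW0 PW PWT) (replaceLaw g i t γ) ≤
        JP f0 f ℓ c (weightP (T := T) PZ PX PW0 PW PWT) g := by
  obtain ⟨k, hk⟩ : ∃ k, t + (k + 1) = T := ⟨T - t - 1, by omega⟩
  -- cost of playing the profile `a` at time `t` and following `g` afterwards
  let q := fun z x y u (a : ∀ j, U j) => c t (z (Fin.last t)) x a +
    stepE f0 f ℓ PW0 PW PWT t (value f0 f ℓ PW0 PW PWT c g k (t + 1)) z x y u a
  have hval : ∀ γ z x y u, value f0 f ℓ PW0 PW PWT c (replaceLaw g i t γ) (k + 1) t z x y u =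
      q z x y u (Function.update (act g t z y u) i (γ z (y i) u)) := by
    intro γ z x y u
    simp only [value, act_replaceLaw, q]
    rw [value_congr_strategy f0 f ℓ PW0 PW PWT c (replaceLaw g i t γ) g k (t + 1)
      fun j s h => replaceLaw_time g i t γ j s (by omega)]
  have hself : replaceLaw g i t (g i t) = g := by
    unfold replaceLaw
    rw [Function.update_eq_self]
    exact Function.update_eq_self i g
  have hrule : ∀ z u, ∃ γ : (Fin (t + 1) → Y i) → U i,
      (∀ b b', belief f ℓ PX PW PWT i t z b u = belief f ℓ PX PW PWT i t z b' u → γ b = γ b') ∧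
      ∑ y, ∑ x, dens f0 f ℓ PZ PX PW0 PW PWT g t z x y u *
          q z x y u (Function.update (act g t z y u) i (γ (y i))) ≤
        ∑ y, ∑ x, dens f0 f ℓ PZ PX PW0 PW PWT g t z x y u *
          q z x y u (Function.update (act g t z y u) i (g i t z (y i) u)) := by
    intro z u
    refine exists_class_rule i (fun b => belief f ℓ PX PW PWT i t z b u)
      (fun b => ∑ x, lik f ℓ PX PW PWT g i t z b u x)
      (fun b => Finset.sum_nonneg fun x _ =>
        lik_nonneg f ℓ PX PW PWT hPX hPW' hPWT' g i t z b u x)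
      (fun y a => ∑ x, dens f0 f ℓ PZ PX PW0 PW PWT g t z x y u *
          q z x y u (Function.update (act g t z y u) i a))
      (fun y a => ∑ x : ∀ j, X j, (pubw f0 PZ PW0 t z u *
        (belief f ℓ PX PW PWT i t z (y i) u (x i) *
          ∏ j ∈ Finset.univ.erase i, lik f ℓ PX PW PWT g j t z (y j) u (x j))) *
          q z x y u (Function.update (act g t z y u) i a)) ?_ ?_ (fun b => g i t z b u)
    · intro y a
      simp only [dens]
      rw [Finset.mul_sum]
      refine Finset.sum_congr rfl fun x _ => ?_
      rw [← Finset.mul_prod_erase Finset.univ _ (Finset.mem_univ i),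
        lik_eq f ℓ PX PW PWT hPX hPW' hPWT' g i t z (y i) u (x i)]
      ring
    · intro y y' a hi hj
      refine Finset.sum_congr rfl fun x _ => ?_
      have h1 : ∏ j ∈ Finset.univ.erase i, lik f ℓ PX PW PWT g j t z (y j) u (x j) =
          ∏ j ∈ Finset.univ.erase i, lik f ℓ PX PW PWT g j t z (y' j) u (x j) :=
        Finset.prod_congr rfl fun j h => by rw [hj j (Finset.ne_of_mem_erase h)]
      have h2 : Function.update (act g t z y u) i a = Function.update (act g t z y' u) i a := by
        funext j
        by_cases h : j = i
        · subst h; simp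
        · simp [h, act, hj j h]
      rw [h1, h2, hi]
      simp only [q]
      rw [stepE_value_congr_belief f0 f ℓ PX PW0 PW PWT c g i k t
        (fun s ha hb => hs s ha (by omega)) z x y y' u _ hi hj]
  choose γ hγ1 hγ2 using hrule
  refine ⟨fun z b u => γ z u b, fun z y y' u h => ?_, ?_⟩
  · rw [replaceLaw_self]
    exact hγ1 z u y y' h
  · set g' := replaceLaw g i t (fun z b u => γ z u b) with hg'
    have hpast : ∀ j, ∀ s < t, g' j s = g j s := fun j s h =>
      replaceLaw_time g i t _ j s (by omega)
    have hJ := JP_split (T := T) f0 f ℓ PZ PX PW0 PW PWT c hPW0 hPW hPWT g (k + 1) t hk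
    have hJ' := JP_split (T := T) f0 f ℓ PZ PX PW0 PW PWT c hPW0 hPW hPWT g' (k + 1) t hk
    rw [hJ, hJ', EH_congr_strategy f0 f ℓ PZ PX PW0 PW PWT g' g t ht hpast]
    refine add_le_add (le_of_eq ?_) ?_
    · refine Finset.sum_congr rfl fun s hst => ?_
      have hst' : s < t := Finset.mem_range.mp hst
      rw [EH_congr_strategy f0 f ℓ PZ PX PW0 PW PWT g' g s (by omega)
        fun j r hr => hpast j r (by omega)]
      congr 1
      funext z x y u
      have : act g' s z y u = act g s z y u := funext fun j => by
        simp only [act, hpast j s hst']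
      rw [this]
    · rw [EH_eq f0 f ℓ PZ PX PW0 PW PWT hPW0 hPW hPWT g t ht,
        EH_eq f0 f ℓ PZ PX PW0 PW PWT hPW0 hPW hPWT g t ht]
      have hreord : ∀ H : (Fin (t + 1) → Z) → (∀ i, X i) → (∀ i, Fin (t + 1) → Y i) →
          (Fin t → ∀ j, U j) → ℝ,
          ∑ z, ∑ x, ∑ y, ∑ u, H z x y u = ∑ z, ∑ u, ∑ y, ∑ x, H z x y u := by
        intro H
        refine Finset.sum_congr rfl fun z _ => ?_
        rw [Finset.sum_comm]
        simp_rw [fun y => Finset.sum_comm (s := (Finset.univ : Finset (∀ i, X i)))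
          (t := (Finset.univ : Finset (Fin t → ∀ j, U j))) (f := fun x u => H z x y u)]
        exact Finset.sum_comm
      rw [hreord, hreord]
      refine Finset.sum_le_sum fun z _ => Finset.sum_le_sum fun u _ => ?_
      have h1 := hγ2 z u
      have h2 : ∀ x y, value f0 f ℓ PW0 PW PWT c g (k + 1) t z x y u =
          q z x y u (Function.update (act g t z y u) i (g i t z (y i) u)) := fun x y => by
        rw [← hval, hself]
      simp only [hval, h2, hg']
      exact h1

/-! ### The filter is the posterior -/

/-- Everywhere on the support of the primitive randomness, the posterior of station `i` on its
local state is the value of its filter. -/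
theorem XiBelief_eq (hPX : ∀ i z a, 0 ≤ PX i z a) (hPW' : ∀ i a, 0 ≤ PW i a)
    (hPWT' : ∀ i a, 0 ≤ PWT i a) (hPW0 : ∑ a, PW0 a = 1) (hPW : ∀ i, ∑ a, PW i a = 1)
    (hPWT : ∀ i, ∑ a, PWT i a = 1)
    (hμ : ∀ ω : OmegaP T Z X W0 W WT, 0 ≤ weightP PZ PX PW0 PW PWT ω)
    (g : StrategyP Z Y U) (i : Fin n) (t : ℕ) (ht : t < T)
    (ω : OmegaP T Z X W0 W WT) (hω : weightP PZ PX PW0 PW PWT ω ≠ 0) :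
    XiBelief f0 f ℓ (weightP PZ PX PW0 PW PWT) g i t ω =
      belief f ℓ PX PW PWT i t (zH f0 f ℓ g t ω) (yH f0 f ℓ g t ω i) (uH f0 f ℓ g t ω) := by
  set z₀ := zH f0 f ℓ g t ω with hz₀
  set b₀ := yH f0 f ℓ g t ω i with hb₀
  set u₀ := uH f0 f ℓ g t ω with hu₀
  let μ : OmegaP T Z X W0 W WT → ℝ := weightP PZ PX PW0 PW PWT
  obtain ⟨B, hBdef⟩ : ∃ B : OmegaP T Z X W0 W WT → Prop, B = fun ω' =>
    (∀ s ≤ t, YpP f0 f ℓ g i s ω' = YpP f0 f ℓ g i s ω) ∧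
      (∀ s ≤ t, ZpP f0 f ℓ g s ω' = ZpP f0 f ℓ g s ω) ∧
      (∀ s < t, ∀ j, UpP f0 f ℓ g j s ω' = UpP f0 f ℓ g j s ω) := ⟨_, rfl⟩
  have hB : ∀ ω', B ω' ↔ yH f0 f ℓ g t ω' i = b₀ ∧ zH f0 f ℓ g t ω' = z₀ ∧
      uH f0 f ℓ g t ω' = u₀ := by
    intro ω'
    rw [hBdef]
    refine and_congr ⟨fun h => ?_, fun h s hs => ?_⟩
      (and_congr ⟨fun h => ?_, fun h s hs => ?_⟩ ⟨fun h => ?_, fun h s hs j => ?_⟩)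
    · funext s
      rw [hb₀, yH_apply, yH_apply, h s (by omega)]
    · have := congrFun h ⟨s, by omega⟩
      rwa [hb₀, yH_apply, yH_apply] at this
    · funext s
      rw [hz₀, zH_apply, zH_apply, h s (by omega)]
    · have := congrFun h ⟨s, by omega⟩
      rwa [hz₀, zH_apply, zH_apply] at this
    · funext s j
      rw [hu₀, uH_apply, uH_apply, h s s.isLt j]
    · have := congrFun (congrFun h ⟨s, hs⟩) j
      rwa [hu₀, uH_apply, uH_apply] at this
  have hcard : (Fintype.card (X i) : ℝ) ≠ 0 := by exact_mod_cast Fintype.card_ne_zero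
  -- the sum includes coordinate `i` of `x`, which the summand ignores, so `R` is
  -- `card (X i)` times the mass of the information of station `i` (up to the total of its belief)
  let R : ℝ := ∑ x : ∀ j, X j, ∑ y : ∀ j, Fin (t + 1) → Y j, if y i = b₀ then
    pubw f0 PZ PW0 t z₀ u₀ * (∑ x', lik f ℓ PX PW PWT g i t z₀ b₀ u₀ x') *
      ∏ j ∈ Finset.univ.erase i, lik f ℓ PX PW PWT g j t z₀ (y j) u₀ (x j) else 0
  have hnum : ∀ x₀, Pr μ (fun ω' => XpP f0 f ℓ g i t ω' = x₀ ∧ B ω') =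
      belief f ℓ PX PW PWT i t z₀ b₀ u₀ x₀ * (R / Fintype.card (X i)) := by
    intro x₀
    have h1 : Pr μ (fun ω' => XpP f0 f ℓ g i t ω' = x₀ ∧ B ω') =
        EH f0 f ℓ PZ PX PW0 PW PWT T g t
          (fun z x y u => if z = z₀ then if u = u₀ then if x i = x₀ then if y i = b₀ then 1
            else 0 else 0 else 0 else 0) := by
      unfold Pr EH
      refine Finset.sum_congr rfl fun ω' _ => ?_
      have hx : XpP f0 f ℓ g i t ω' = xC f0 f ℓ g t ω' i := rfl
      simp only [hx, ← ite_and, mul_ite, mul_one, mul_zero, μ]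
      refine if_congr ?_ rfl rfl
      rw [hB]
      tauto
    rw [h1, EH_eq f0 f ℓ PZ PX PW0 PW PWT hPW0 hPW hPWT g t ht]
    rw [Finset.sum_eq_single z₀ (fun z _ hz => by simp [hz]) (by simp)]
    have hfact : ∀ x y, y i = b₀ → x i = x₀ →
        dens f0 f ℓ PZ PX PW0 PW PWT g t z₀ x y u₀ = belief f ℓ PX PW PWT i t z₀ b₀ u₀ x₀ *
          (pubw f0 PZ PW0 t z₀ u₀ * (∑ x', lik f ℓ PX PW PWT g i t z₀ b₀ u₀ x') *
            ∏ j ∈ Finset.univ.erase i, lik f ℓ PX PW PWT g j t z₀ (y j) u₀ (x j)) := by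
      intro x y hy hx
      unfold dens
      rw [← Finset.mul_prod_erase Finset.univ _ (Finset.mem_univ i), hy, hx,
        lik_eq f ℓ PX PW PWT hPX hPW' hPWT' g i t z₀ b₀ u₀ x₀]
      ring
    have hterm : ∀ x y, ∑ u, dens f0 f ℓ PZ PX PW0 PW PWT g t z₀ x y u *
        (if z₀ = z₀ then if u = u₀ then if x i = x₀ then if y i = b₀ then (1 : ℝ)
            else 0 else 0 else 0 else 0) =
        belief f ℓ PX PW PWT i t z₀ b₀ u₀ x₀ * (if x i = x₀ then if y i = b₀ then
          (pubw f0 PZ PW0 t z₀ u₀ * (∑ x', lik f ℓ PX PW PWT g i t z₀ b₀ u₀ x') *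
            ∏ j ∈ Finset.univ.erase i, lik f ℓ PX PW PWT g j t z₀ (y j) u₀ (x j))
              else 0 else 0) := by
      intro x y
      rw [Finset.sum_eq_single u₀ (fun u _ hu => by simp [hu]) (by simp)]
      by_cases hx : x i = x₀
      · by_cases hy : y i = b₀
        · simp [hx, hy, hfact x y hy hx]
        · simp [hy]
      · simp [hx]
    refine (Finset.sum_congr rfl fun x _ => Finset.sum_congr rfl fun y _ => hterm x y).trans ?_
    simp_rw [← Finset.mul_sum]
    congr 1
    rw [eq_div_iff hcard, mul_comm]
    refine Eq.trans ?_ (sum_marked i x₀ _ fun x b => ?_)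
    · congr 1
      refine Finset.sum_congr rfl fun x _ => ?_
      split_ifs with hx
      · rfl
      · simp
    · refine Finset.sum_congr rfl fun y _ => ?_
      split_ifs with hy
      · congr 1
        refine Finset.prod_congr rfl fun j hj => ?_
        rw [Function.update_of_ne (Finset.ne_of_mem_erase hj)]
      · rfl
  have hden : Pr μ B = (∑ x₀, belief f ℓ PX PW PWT i t z₀ b₀ u₀ x₀) *
      (R / Fintype.card (X i)) := by
    rw [Finset.sum_mul]
    simp_rw [← hnum]
    unfold Pr
    rw [Finset.sum_comm]
    refine Finset.sum_congr rfl fun ω' _ => ?_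
    by_cases hb : B ω'
    · simp [hb]
    · simp [hb]
  have hpos : 0 < Pr μ B := by
    have h1 : (if B ω then μ ω else 0) ≤ Pr μ B :=
      Finset.single_le_sum (f := fun ω' => if B ω' then μ ω' else 0)
        (fun ω' _ => by split_ifs; exacts [hμ ω', le_rfl]) (Finset.mem_univ ω)
    rw [if_pos ((hB ω).mpr ⟨rfl, rfl, rfl⟩)] at h1
    exact lt_of_lt_of_le (lt_of_le_of_ne (hμ ω) (Ne.symm hω)) h1
  -- a normalized weight function has mass one or zero, and zero is excluded by `hpos`
  have hsum : ∑ x₀, belief f ℓ PX PW PWT i t z₀ b₀ u₀ x₀ = 1 := by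
    have hne : ∑ x₀, belief f ℓ PX PW PWT i t z₀ b₀ u₀ x₀ ≠ 0 := fun h => by
      rw [hden, h, zero_mul] at hpos
      exact lt_irrefl _ hpos
    have hn : ∀ v : X i → ℝ, ∑ a, normalize v a ≠ 0 → ∑ a, normalize v a = 1 := by
      intro v hv
      simp only [normalize, ← Finset.sum_div] at hv ⊢
      exact div_self fun h => hv (by rw [h, div_zero])
    cases t with
    | zero => exact hn _ hne
    | succ t => exact hn _ hne
  funext x₀
  have hfin : XiBelief f0 f ℓ (weightP PZ PX PW0 PW PWT) g i t ω x₀ =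
      Pr μ (fun ω' => XpP f0 f ℓ g i t ω' = x₀ ∧ B ω') / Pr μ B := by
    rw [hBdef]; rfl
  have hR : Pr μ B = R / Fintype.card (X i) := by rw [hden, hsum, one_mul]
  rw [hfin, hnum, ← hR, mul_div_assoc, div_self hpos.ne', mul_one]

/-! ### Backward induction over time and induction over stations -/

/-- Backward induction: the last `k` control laws of station `i` can be made to act through its
belief, without touching the other stations and at no additional cost. -/
theorem improve_station (hPX : ∀ i z a, 0 ≤ PX i z a) (hPW' : ∀ i a, 0 ≤ PW i a)
    (hPWT' : ∀ i a, 0 ≤ PWT i a) (hPW0 : ∑ a, PW0 a = 1) (hPW : ∀ i, ∑ a, PW i a = 1)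
    (hPWT : ∀ i, ∑ a, PWT i a = 1) (g : StrategyP Z Y U) (i : Fin n) (k : ℕ) :
    ∃ g' : StrategyP Z Y U, (∀ j, j ≠ i → g' j = g j) ∧
      (∀ s, T - k ≤ s → s < T → Structured f ℓ PX PW PWT i s g') ∧
      JP f0 f ℓ c (weightP (T := T) PZ PX PW0 PW PWT) g' ≤
        JP f0 f ℓ c (weightP (T := T) PZ PX PW0 PW PWT) g := by
  induction k with
  | zero => exact ⟨g, fun _ _ => rfl, fun s h1 h2 => by omega, le_rfl⟩
  | succ k ih =>
    obtain ⟨g', h1, h2, h3⟩ := ih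
    by_cases hk : k < T
    · obtain ⟨γ, h4, h5⟩ := improve f0 f ℓ PZ PX PW0 PW PWT c hPX hPW' hPWT' hPW0 hPW hPWT g' i
        (T - (k + 1)) (by omega) (fun s ha hb => h2 s (by omega) hb)
      refine ⟨_, fun j hj => ?_, fun s ha hb => ?_, h5.trans h3⟩
      · rw [← h1 j hj]
        funext s
        exact replaceLaw_station g' i _ γ j s hj
      · by_cases hs : s = T - (k + 1)
        · rw [hs]; exact h4
        · intro z y y' u h
          rw [replaceLaw_time g' i _ γ i s hs]
          exact h2 s (by omega) hb z y y' u h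
    · exact ⟨g', h1, fun s ha hb => h2 s (by omega) hb, h3⟩

/-- Induction over stations: `Structured` refers to the strategy of one station only, the beliefs
being strategy-independent, so stations already treated stay structured. -/
theorem improve_all (hPX : ∀ i z a, 0 ≤ PX i z a) (hPW' : ∀ i a, 0 ≤ PW i a)
    (hPWT' : ∀ i a, 0 ≤ PWT i a) (hPW0 : ∑ a, PW0 a = 1) (hPW : ∀ i, ∑ a, PW i a = 1)
    (hPWT : ∀ i, ∑ a, PWT i a = 1) (g : StrategyP Z Y U) (S : Finset (Fin n)) :
    ∃ g' : StrategyP Z Y U,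
      (∀ i ∈ S, ∀ s, s < T → Structured f ℓ PX PW PWT i s g') ∧
      JP f0 f ℓ c (weightP (T := T) PZ PX PW0 PW PWT) g' ≤
        JP f0 f ℓ c (weightP (T := T) PZ PX PW0 PW PWT) g := by
  induction S using Finset.induction_on with
  | empty => exact ⟨g, by simp, le_rfl⟩
  | insert i S hi ih =>
    obtain ⟨g', h1, h2⟩ := ih
    obtain ⟨g'', h3, h4, h5⟩ := improve_station (T := T) f0 f ℓ PZ PX PW0 PW PWT c hPX hPW' hPWT'
      hPW0 hPW hPWT g' i T
    refine ⟨g'', fun j hj s hs => ?_, h5.trans h2⟩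
    by_cases hji : j = i
    · subst hji
      exact h4 s (by omega) hs
    · intro z y y' u h
      rw [h3 j hji]
      exact h1 j ((Finset.mem_insert.mp hj).resolve_left hji) s hs z y y' u h

end Helpers

/-- Proposition 6: in the partial observation model, restricting attention
to control laws of the form `Uⁱ_t = ḡⁱ_t(Ξⁱ_t, Z_{1:t}, U_{1:t-1})`, where
`Ξⁱ_t(x) = P(Xⁱ_t = x | Yⁱ_{1:t}, Z_{1:t}, U_{1:t-1})`, is without loss of optimality: for
every strategy `g` of the general form `Uⁱ_t = gⁱ_t(Z_{1:t}, Yⁱ_{1:t}, U_{1:t-1})` there are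
a strategy `ḡ` and functions `h i t` such that along every trajectory of `ḡ` the realized
actions satisfy `Uⁱ_t = h i t (Ξⁱ_t, Z_{1:t}, U_{1:t-1})`, and `J(ḡ) ≤ J(g)`. -/
theorem partial_obs_structure_local_belief
    (PZ : Z → ℝ) (PX : ∀ i, Z → X i → ℝ) (PW0 : W0 → ℝ)
    (PW : ∀ i, W i → ℝ) (PWT : ∀ i, WT i → ℝ)
    (hPZ : IsLaw PZ) (hPX : ∀ i z, IsLaw (PX i z))
    (hPW0 : IsLaw PW0) (hPW : ∀ i, IsLaw (PW i)) (hPWT : ∀ i, IsLaw (PWT i))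
    (c : ℕ → Z → (∀ i, X i) → (∀ i, U i) → ℝ)
    (g : StrategyP Z Y U) :
    ∃ (gbar : StrategyP Z Y U)
      (h : ∀ i : Fin n, ∀ t : ℕ, (X i → ℝ) → (Fin (t + 1) → Z) → (Fin t → ∀ j, U j) → U i),
      (∀ (i : Fin n) (t : ℕ), t < T → ∀ ω : OmegaP T Z X W0 W WT,
        weightP PZ PX PW0 PW PWT ω ≠ 0 →
          UpP f0 f ℓ gbar i t ω =
            h i t (XiBelief f0 f ℓ (weightP PZ PX PW0 PW PWT) gbar i t ω)
              (fun s : Fin (t + 1) => ZpP f0 f ℓ gbar s ω)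
              (fun (s : Fin t) (j : Fin n) => UpP f0 f ℓ gbar j s ω)) ∧
      JP f0 f ℓ c (weightP (T := T) PZ PX PW0 PW PWT) gbar ≤
        JP f0 f ℓ c (weightP (T := T) PZ PX PW0 PW PWT) g := by
  obtain ⟨g', hstr, hJ⟩ := improve_all (T := T) f0 f ℓ PZ PX PW0 PW PWT c
    (fun i z => (hPX i z).1) (fun i => (hPW i).1) (fun i => (hPWT i).1) hPW0.2
    (fun i => (hPW i).2) (fun i => (hPWT i).2) g Finset.univ
  have hμ : ∀ ω : OmegaP T Z X W0 W WT, 0 ≤ weightP PZ PX PW0 PW PWT ω := fun ω =>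
    mul_nonneg (mul_nonneg (mul_nonneg (mul_nonneg (hPZ.1 _)
      (Finset.prod_nonneg fun i _ => (hPX i _).1 _)) (Finset.prod_nonneg fun t _ => hPW0.1 _))
      (Finset.prod_nonneg fun i _ => Finset.prod_nonneg fun t _ => (hPW i).1 _))
      (Finset.prod_nonneg fun i _ => Finset.prod_nonneg fun t _ => (hPWT i).1 _)
  -- the law `h` evaluates `g'` at any observation history producing the given belief
  refine ⟨g', fun i t ξ z u =>
    if h : ∃ y, belief f ℓ PX PW PWT i t z y u = ξ then g' i t z h.choose u
    else Classical.arbitrary (U i), fun i t ht ω hω => ?_, hJ⟩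
  have hz : (fun s : Fin (t + 1) => ZpP f0 f ℓ g' s ω) = zH f0 f ℓ g' t ω :=
    funext fun s => (zH_apply f0 f ℓ g' t ω s).symm
  have hu : (fun (s : Fin t) (j : Fin n) => UpP f0 f ℓ g' j s ω) = uH f0 f ℓ g' t ω :=
    funext fun s => funext fun j => (uH_apply f0 f ℓ g' t ω j s).symm
  rw [hz, hu, XiBelief_eq f0 f ℓ PZ PX PW0 PW PWT (fun i z => (hPX i z).1) (fun i => (hPW i).1)
    (fun i => (hPWT i).1) hPW0.2 (fun i => (hPW i).2) (fun i => (hPWT i).2) hμ g' i t ht ω hω,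
    UpP_eq]
  have hex : ∃ y, belief f ℓ PX PW PWT i t (zH f0 f ℓ g' t ω) y (uH f0 f ℓ g' t ω) =
      belief f ℓ PX PW PWT i t (zH f0 f ℓ g' t ω) (yH f0 f ℓ g' t ω i) (uH f0 f ℓ g' t ω) :=
    ⟨_, rfl⟩
  simp only [dif_pos hex]
  exact hstr i (Finset.mem_univ i) t ht _ _ _ _ hex.choose_spec.symm

end ControlSharing
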